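/- arXiv:2604.10964 — 3 statements merged into one kernel-verified Lean document; each statement's English description precedes it below -/
import Mathlib

section
/- Let I ⊆ ℤ₂[[x₁,…,x₆]] be the square-free monomial ideal I = (x₁x₂x₃, x₁x₂x₄, x₁x₃x₅, x₁x₄x₆, x₁x₅x₆, x₂x₃x₆, x₂x₄x₅, x₂x₅x₆, x₃x₄x₅, x₃x₄x₆) corresponding to the standard triangulation of ℝP². Then the local cohomology module H⁴_I(ℤ₂[[x₁,…,x₆]]) is annihilated by 2, i.e. 2·u = 0 for every u ∈ H⁴_I(ℤ₂[[x₁,…,x₆]]). -/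
/-!
The quotient of `R[x₁,…,x₆]` by the Stanley–Reisner ideal of the six-vertex triangulation of `ℝP²`
has, over every coefficient ring `R`, a multigraded free resolution with ranks `1, 10, 15, 7, 1`.
Its first part is cellular: the 10 generators are the vertices, the 15 four-element subsets the
edges and the 6 five-element subsets the pentagons of the hemi-dodecahedron, which is a cell
structure on `ℝP²` with Petersen graph as 1-skeleton. Since `H₁(ℝP²; ℤ) = ℤ/2`, one has to add one
more 2-cell of degree `x₁⋯x₆`, glued along a noncontractible 5-cycle. The second homology of the
result is generated by (sum of all pentagons) + 2 · (extra cell), and this is the last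
differential. Hence the last differential, followed by the coordinate of the extra cell, is
multiplication by 2, and 2 kills every `Ext⁴` computed by the resolution (`two_smul_Ext`).

The same holds with `xᵢ` replaced by `xᵢᵗ`, for the ideal `J t` generated by the `t`-th powers of
the generators of `I`. Exactness over the power series ring (`diff_exact`) is checked one
multidegree `b` at a time. There the complex becomes the subcomplex of cells whose label lies in
`{i | t ≤ bᵢ}`, with coefficients in `R`, and an integral contracting homotopy is written down for
each of the 64 subsets (`H_D`).

Finally `J t ⊆ I ^ t`, and `I ^ s ⊆ J t` for large `s`. So the transition map from
`Ext⁴(A/I ^ t, A)` to `Ext⁴(A/I ^ s, A)` factors through `Ext⁴(A/J t, A)` and dies after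
multiplication by 2, hence so does the colimit.
-/

/-!
STATEMENT 2: For the square-free monomial ideal `I ⊆ ℤ₂[[x₁,…,x₆]]` corresponding to the
standard triangulation of ℝP², the local cohomology module `H⁴_I(ℤ₂[[x₁,…,x₆]])` is
annihilated by 2.  Variables are 0-indexed: `xᵢ₊₁ = X i`.
-/

noncomputable section

/-- The power series ring `A = ℤ₂[[x₁,…,x₆]]`. -/
abbrev A : Type := MvPowerSeries (Fin 6) ℤ_[2]

/-- `x i` is the variable `xᵢ₊₁`. -/
def x (i : Fin 6) : A := MvPowerSeries.X i

/-- The monomial ideal corresponding to the standard triangulation of ℝP². -/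
def I : Ideal A :=
  Ideal.span
    {x 0 * x 1 * x 2, x 0 * x 1 * x 3, x 0 * x 2 * x 4, x 0 * x 3 * x 5,
     x 0 * x 4 * x 5, x 1 * x 2 * x 5, x 1 * x 3 * x 4, x 1 * x 4 * x 5,
     x 2 * x 3 * x 4, x 2 * x 3 * x 5}

namespace RP2

open CategoryTheory Limits MvPowerSeries Opposite

/-! ### The integral cellular data -/

/-- The ranks `1, 10, 15, 7, 1` of the free modules in the resolution. -/
def rk : ℕ → ℕ
  | 0 => 1
  | 1 => 10
  | 2 => 15
  | 3 => 7
  | 4 => 1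
  | _ => 0

/-- The multidegree of the `j`-th basis element in homological degree `n`, a subset of
`{0,…,5}` encoded as a bit mask. -/
def lab (n j : ℕ) : ℕ :=
  ([[0], [7, 11, 21, 41, 49, 38, 26, 50, 28, 44],
    [15, 23, 39, 27, 43, 51, 29, 45, 53, 57, 30, 46, 54, 58, 60],
    [62, 61, 59, 55, 47, 31, 63], [63]].getD n []).getD j 0

/-- Inclusion of subsets of `{0,…,5}` encoded as bit masks. -/
def sub (a s : ℕ) : Bool := a &&& s == a

/-- The edges of the Petersen graph, joining the two generators of `I` that divide a given
squarefree monomial of degree 4. -/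
def edges : List (ℕ × ℕ) :=
  [(0, 1), (0, 2), (0, 5), (1, 6), (1, 3), (4, 7), (2, 8), (3, 9), (2, 4), (3, 4), (6, 8), (5, 9),
    (5, 7), (6, 7), (8, 9)]

/-- The boundaries of the 2-cells as combinations of edges: six pentagons and, last, the extra
cell glued along a noncontractible 5-cycle. -/
def cells : List (List ℤ) :=
  [[0, 0, 0, 0, 0, 0, 0, 0, 0, 0, 1, -1, 1, -1, 1],
   [0, 0, 0, 0, 0, 0, -1, 1, 1, -1, 0, 0, 0, 0, -1],
   [0, 0, 0, 1, -1, -1, 0, 0, 0, -1, 0, 0, 0, 1, 0],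
   [0, 1, -1, 0, 0, 1, 0, 0, 1, 0, 0, 0, -1, 0, 0],
   [-1, 0, 1, 0, -1, 0, 0, -1, 0, 0, 0, 1, 0, 0, 0],
   [-1, 1, 0, -1, 0, 0, 1, 0, 0, 0, -1, 0, 0, 0, 0],
   [1, -1, 0, 0, 1, 0, 0, 0, -1, 1, 0, 0, 0, 0, 0]]

/-- The integer coefficients of the differential `F (n + 1) → F n` (row `k`, column `j`). -/
def D : ℕ → ℕ → ℕ → ℤ
  | 0, _, _ => 1
  | 1, k, j =>
    let e := edges.getD j (0, 0)
    if k = e.2 then 1 else if k = e.1 then -1 else 0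
  | 2, k, j => (cells.getD j []).getD k 0
  | 3, k, _ => if k = 6 then 2 else 1
  | _, _, _ => 0

/-- The entry `(k, j)` of the matrix stored sparsely in `tab` under the key `s`. -/
def look (tab : List (ℕ × List (ℕ × ℕ × ℤ))) (s k j : ℕ) : ℤ :=
  (((tab.lookup s).getD []).filterMap
    fun p => if p.1 = k ∧ p.2.1 = j then some p.2.2 else none).sum

/-- For each subset `s` spanning an edge, paths in the subgraph of labels inside `s` from its
first vertex to every other vertex: an entry `(k, j, c)` says that edge `k` occurs with coefficient
`c` in the path to vertex `j`. Subsets without edges need no entry. -/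
def H1 : List (ℕ × List (ℕ × ℕ × ℤ)) :=
  [(15, [(0, 1, 1)]),
   (23, [(1, 2, 1)]),
   (27, [(3, 6, 1)]),
   (29, [(6, 8, 1)]),
   (30, [(10, 8, 1)]),
   (31, [(0, 1, 1), (1, 2, 1), (0, 6, 1), (3, 6, 1), (1, 8, 1), (6, 8, 1)]),
   (39, [(2, 5, 1)]),
   (43, [(4, 3, 1)]),
   (45, [(7, 9, 1)]),
   (46, [(11, 9, 1)]),
   (47, [(0, 1, 1), (2, 5, 1), (0, 3, 1), (4, 3, 1), (2, 9, 1), (11, 9, 1)]),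
   (51, [(5, 7, 1)]),
   (53, [(8, 4, 1)]),
   (54, [(12, 7, 1)]),
   (55, [(1, 2, 1), (2, 5, 1), (1, 4, 1), (8, 4, 1), (2, 7, 1), (12, 7, 1)]),
   (57, [(9, 4, 1)]),
   (58, [(13, 7, 1)]),
   (59, [(3, 6, 1), (4, 3, 1), (3, 7, 1), (13, 7, 1), (4, 4, 1), (9, 4, 1)]),
   (60, [(14, 9, 1)]),
   (61, [(6, 8, 1), (8, 4, 1), (6, 9, 1), (14, 9, 1), (8, 3, 1), (9, 3, -1)]),
   (62, [(11, 9, 1), (12, 7, 1), (11, 8, 1), (14, 8, -1), (12, 6, 1), (13, 6, -1)]),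
   (63, [(0, 1, 1), (1, 2, 1), (2, 5, 1), (0, 6, 1), (3, 6, 1), (0, 3, 1), (4, 3, 1),
       (1, 8, 1), (6, 8, 1), (1, 4, 1), (8, 4, 1), (2, 9, 1), (11, 9, 1), (2, 7, 1),
       (12, 7, 1)])]

/-- For each subset `s`, the 2-chains bounded by the cycles that an edge `j` closes up with the
paths in `H1`: an entry `(k, j, c)` says that the 2-cell `k` occurs with coefficient `c`. -/
def H2 : List (ℕ × List (ℕ × ℕ × ℤ)) :=
  [(31, [(5, 10, -1)]),
   (47, [(4, 7, -1)]),
   (55, [(3, 5, 1)]),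
   (59, [(2, 5, -1)]),
   (61, [(1, 7, 1)]),
   (62, [(0, 10, 1)]),
   (63, [(3, 5, 1), (4, 7, -1), (6, 9, 1), (5, 10, -1), (2, 13, 1), (3, 13, 1), (6, 13, 1),
       (1, 14, -1), (4, 14, -1), (6, 14, -1)])]

/-- The contracting homotopy `F n → F (n + 1)` of the strand belonging to the subset `s`
(row `k`, column `j`); in degree 0 it picks the first vertex inside `s`. -/
def H : ℕ → ℕ → ℕ → ℕ → ℤ
  | 0, s, k, _ => if (List.range 10).find? (fun a => sub (lab 1 a) s) = some k then 1 else 0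
  | 1, s, k, j => look H1 s k j
  | 2, s, k, j => look H2 s k j
  | 3, _, _, j => if j = 0 then 1 else 0
  | _, _, _, _ => 0

theorem D_sub : ∀ n < 4, ∀ k < rk n, ∀ j < rk (n + 1),
    D n k j ≠ 0 → sub (lab n k) (lab (n + 1) j) = true := by decide +kernel

theorem D_D : ∀ n < 3, ∀ k < rk n, ∀ j < rk (n + 2),
    ∑ l : Fin (rk (n + 1)), D n k l * D (n + 1) l j = 0 := by decide +kernel

set_option synthInstance.maxHeartbeats 200000 in
set_option synthInstance.maxSize 1000 in
/-- The homotopy identity `D H + H D = 1` on every strand, in positive homological degree. -/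
theorem H_D : ∀ n < 4, ∀ s < 64, ∀ j < rk (n + 1), ∀ j' < rk (n + 1),
    sub (lab (n + 1) j) s = true → sub (lab (n + 1) j') s = true →
    (∑ k : Fin (rk (n + 2)), if sub (lab (n + 2) k) s = true then
        D (n + 1) j k * H (n + 1) s k j' else 0) +
      (∑ l : Fin (rk n), if sub (lab n l) s = true then H n s j l * D n l j' else 0) =
    if j = j' then 1 else 0 := by decide +kernel

/-! ### The resolution over the power series ring -/

/-- The exponent of the monomial `∏ xᵢᵗ`, `i` running through the subset with bit mask `τ`. -/
noncomputable def ex (t τ : ℕ) : Fin 6 →₀ ℕ :=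
  Finsupp.equivFunOnFinite.symm fun i => if τ.testBit i then t else 0

/-- The bit mask of the subset `{i | t ≤ bᵢ}`. -/
def sig (t : ℕ) (b : Fin 6 →₀ ℕ) : ℕ := ∑ i : Fin 6, if t ≤ b i then 2 ^ (i : ℕ) else 0

theorem ex_apply (t τ : ℕ) (i : Fin 6) : ex t τ i = if τ.testBit i then t else 0 := rfl

theorem lab_lt (n j : ℕ) : lab n j < 64 := by
  have h : ∀ l ∈ [[0], [7, 11, 21, 41, 49, 38, 26, 50, 28, 44],
      [15, 23, 39, 27, 43, 51, 29, 45, 53, 57, 30, 46, 54, 58, 60],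
      [62, 61, 59, 55, 47, 31, 63], [63]], ∀ a ∈ l, a < 64 := by decide
  unfold lab
  rw [List.getD_eq_getElem?_getD, List.getD_eq_getElem?_getD]
  cases h1 : ([[0], [7, 11, 21, 41, 49, 38, 26, 50, 28, 44],
      [15, 23, 39, 27, 43, 51, 29, 45, 53, 57, 30, 46, 54, 58, 60],
      [62, 61, 59, 55, 47, 31, 63], [63]] : List (List ℕ))[n]? with
  | none => simp
  | some l =>
    cases h2 : l[j]? with
    | none => simp [h2]
    | some a => simpa [h2] using h l (List.mem_of_getElem? h1) a (List.mem_of_getElem? h2)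

theorem sig_lt (t : ℕ) (b : Fin 6 →₀ ℕ) : sig t b < 64 := by
  simp only [sig, Fin.sum_univ_six]
  split_ifs <;> decide

theorem testBit_sig (t : ℕ) (b : Fin 6 →₀ ℕ) (i : Fin 6) :
    (sig t b).testBit i = true ↔ t ≤ b i := by
  have key : ∀ (s : Fin 6 → Bool) (i : Fin 6),
      (∑ i : Fin 6, if s i then 2 ^ (i : ℕ) else 0).testBit i = s i := by decide +kernel
  have := key (fun i => decide (t ≤ b i)) i
  simp only [decide_eq_true_eq] at this
  rw [sig, this, decide_eq_true_eq]

theorem sub_iff {a : ℕ} (ha : a < 64) (s : ℕ) :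
    sub a s = true ↔ ∀ i : Fin 6, a.testBit i = true → s.testBit i = true := by
  rw [sub, beq_iff_eq]
  constructor
  · intro h i hi
    rw [← h, Nat.testBit_and] at hi
    simp_all
  · intro h
    refine Nat.eq_of_testBit_eq fun i => ?_
    rw [Nat.testBit_and]
    by_cases hi : i < 6
    · have := h ⟨i, hi⟩
      simp only at this
      cases h1 : a.testBit i <;> simp_all
    · have : a.testBit i = false := Nat.testBit_eq_false_of_lt
        (ha.trans_le ((by norm_num : 64 = 2 ^ 6).le.trans
          (Nat.pow_le_pow_right (by norm_num) (by omega))))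
      simp [this]

theorem ex_le_iff (t : ℕ) {τ : ℕ} (hτ : τ < 64) (b : Fin 6 →₀ ℕ) :
    ex t τ ≤ b ↔ sub τ (sig t b) = true := by
  rw [sub_iff hτ]
  simp only [testBit_sig, Finsupp.le_def, ex_apply]
  refine forall_congr' fun i => ?_
  split_ifs with h <;> simp [h]

theorem ex_mono (t : ℕ) {τ τ' : ℕ} (hτ : τ < 64) (h : sub τ τ' = true) : ex t τ ≤ ex t τ' := by
  rw [sub_iff hτ] at h
  intro i
  simp only [ex_apply]
  split_ifs with h1 h2 <;> simp_all

theorem sub_trans {a b c : ℕ} (ha : a < 64) (hb : b < 64) (h : sub a b = true)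
    (h' : sub b c = true) : sub a c = true := by
  rw [sub_iff ha] at *
  rw [sub_iff hb] at h'
  exact fun i hi => h' i (h i hi)

variable {R : Type} [CommRing R]

/-- The free module in homological degree `n` of the resolution. -/
abbrev F (R : Type) [CommRing R] (n : ℕ) : Type := Fin (rk n) → MvPowerSeries (Fin 6) R

/-- The differential of the resolution in the variables `xᵢᵗ`. Truncated subtraction of exponents
is harmless: `D n k j ≠ 0` implies that the label of `k` is contained in that of `j`. -/
noncomputable def diff (R : Type) [CommRing R] (t n : ℕ) :
    F R (n + 1) →ₗ[MvPowerSeries (Fin 6) R] F R n :=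
  Matrix.mulVecLin (Matrix.of fun k j =>
    monomial (ex t (lab (n + 1) j) - ex t (lab n k)) ((D n k j : ℤ) : R))

open Classical in
/-- The component of `v` in multidegree `b`, where the `j`-th basis vector has the multidegree
`ex t (lab n j)`. -/
noncomputable def strand (t n : ℕ) (b : Fin 6 →₀ ℕ) (v : F R n) (j : Fin (rk n)) : R :=
  if ex t (lab n j) ≤ b then coeff (b - ex t (lab n j)) (v j) else 0

theorem strand_add (t n : ℕ) (a : Fin 6 →₀ ℕ) (v : F R n) (j : Fin (rk n)) :
    strand t n (a + ex t (lab n j)) v j = coeff a (v j) := by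
  rw [strand, if_pos (self_le_add_left _ _), add_tsub_cancel_right]

theorem strand_ext (t n : ℕ) {v w : F R n}
    (h : ∀ b (j : Fin (rk n)), sub (lab n j) (sig t b) = true →
      strand t n b v j = strand t n b w j) : v = w := by
  ext j a
  rw [← strand_add t, ← strand_add t]
  exact h _ _ ((ex_le_iff t (lab_lt _ _) _).1 (self_le_add_left _ _))

theorem strand_zero (t n : ℕ) (b : Fin 6 →₀ ℕ) (j : Fin (rk n)) :
    strand t n b (0 : F R n) j = 0 := by simp [strand]

theorem strand_eq_zero {t n : ℕ} {b : Fin 6 →₀ ℕ} (v : F R n) {j : Fin (rk n)}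
    (h : ¬ sub (lab n j) (sig t b) = true) : strand t n b v j = 0 := by
  rw [strand, if_neg]
  rwa [ex_le_iff t (lab_lt _ _)]

theorem sub_of_D_ne_zero {n : ℕ} {k : Fin (rk n)} {j : Fin (rk (n + 1))} (h : D n k j ≠ 0) :
    sub (lab n k) (lab (n + 1) j) = true := by
  by_cases hn : n < 4
  · exact D_sub n hn k k.2 j j.2 h
  · obtain ⟨m, rfl⟩ : ∃ m, n = m + 4 := ⟨n - 4, by omega⟩
    exact j.elim0

/-- In multidegree `b` the differential acts through the integer matrix `D`, restricted to the
labels contained in `{i | t ≤ bᵢ}`. -/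
theorem strand_diff (t n : ℕ) (b : Fin 6 →₀ ℕ) (v : F R (n + 1)) (k : Fin (rk n))
    (hk : sub (lab n k) (sig t b) = true) :
    strand t n b (diff R t n v) k =
      ∑ j : Fin (rk (n + 1)), ((D n k j : ℤ) : R) * strand t (n + 1) b v j := by
  rw [strand, if_pos ((ex_le_iff t (lab_lt _ _) _).2 hk)]
  simp only [diff, Matrix.mulVecLin_apply, Matrix.mulVec, dotProduct, Matrix.of_apply, map_sum]
  refine Finset.sum_congr rfl fun j _ => ?_
  by_cases hD : D n k j = 0
  · simp [hD]
  have h1 := ex_mono t (lab_lt _ _) (sub_of_D_ne_zero hD)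
  have h2 := (ex_le_iff t (lab_lt _ _) _).2 hk
  rw [coeff_monomial_mul, strand]
  have h3 : ex t (lab (n + 1) j) - ex t (lab n k) ≤ b - ex t (lab n k) ↔
      ex t (lab (n + 1) j) ≤ b := tsub_le_tsub_iff_right h2
  rw [tsub_tsub_tsub_cancel_right h1]
  simp only [h3, mul_ite, mul_zero]

theorem diff_diff (t n : ℕ) (v : F R (n + 2)) : diff R t n (diff R t (n + 1) v) = 0 := by
  by_cases hn : n < 3
  · refine strand_ext t n fun b k hk => ?_
    rw [strand_diff _ _ _ _ _ hk, strand_zero]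
    have : ∀ l : Fin (rk (n + 1)), ((D n k l : ℤ) : R) * strand t (n + 1) b (diff R t (n + 1) v) l =
        ∑ j : Fin (rk (n + 2)), ((D n k l * D (n + 1) l j : ℤ) : R) * strand t (n + 2) b v j := by
      intro l
      by_cases hl : sub (lab (n + 1) l) (sig t b) = true
      · rw [strand_diff _ _ _ _ _ hl, Finset.mul_sum]
        simp [mul_assoc]
      · rw [strand_eq_zero _ hl, mul_zero]
        refine (Finset.sum_eq_zero fun j _ => ?_).symm
        by_cases hD : D (n + 1) l j = 0
        · simp [hD]
        · rw [strand_eq_zero, mul_zero]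
          exact fun h => hl (sub_trans (lab_lt _ _) (lab_lt _ _) (sub_of_D_ne_zero hD) h)
    simp only [this]
    rw [Finset.sum_comm]
    refine Finset.sum_eq_zero fun j _ => ?_
    rw [← Finset.sum_mul, ← Int.cast_sum, D_D n hn k k.2 j j.2, Int.cast_zero, zero_mul]
  · obtain ⟨m, rfl⟩ : ∃ m, n = m + 3 := ⟨n - 3, by omega⟩
    rw [show v = 0 from funext fun j => j.elim0, map_zero, map_zero]

/-- Exactness in positive homological degrees: the homotopies of all strands are applied to the
multidegree components of a cycle. -/
theorem diff_exact (t n : ℕ) (v : F R (n + 1)) (hv : diff R t n v = 0) :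
    ∃ w, diff R t (n + 1) w = v := by
  by_cases hn : n < 4
  -- the coefficients of `w` are prescribed so that its component in each multidegree is the
  -- homotopy of that strand applied to the component of `v`
  · let w : F R (n + 2) := fun k a => ∑ j : Fin (rk (n + 1)),
      ((H (n + 1) (sig t (a + ex t (lab (n + 2) k))) k j : ℤ) : R) *
        strand t (n + 1) (a + ex t (lab (n + 2) k)) v j
    have hw : ∀ b (k : Fin (rk (n + 2))), strand t (n + 2) b w k =
        if sub (lab (n + 2) k) (sig t b) = true then
        ∑ j : Fin (rk (n + 1)), ((H (n + 1) (sig t b) k j : ℤ) : R) * strand t (n + 1) b v j else 0 := by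
      intro b k
      split_ifs with h
      · have h2 := (ex_le_iff t (lab_lt _ _) _).2 h
        rw [strand, if_pos h2]
        have e : coeff (b - ex t (lab (n + 2) k)) (w k) = ∑ j : Fin (rk (n + 1)),
            ((H (n + 1) (sig t (b - ex t (lab (n + 2) k) + ex t (lab (n + 2) k))) k j : ℤ) : R) *
              strand t (n + 1) (b - ex t (lab (n + 2) k) + ex t (lab (n + 2) k)) v j := rfl
        rw [e, tsub_add_cancel_of_le h2]
      · exact strand_eq_zero _ h
    have hv' : ∀ b (l : Fin (rk n)), sub (lab n l) (sig t b) = true →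
        ∑ j : Fin (rk (n + 1)), ((D n l j : ℤ) : R) * strand t (n + 1) b v j = 0 := by
      intro b l hl
      rw [← strand_diff t n b v l hl, hv, strand_zero]
    refine ⟨w, strand_ext t (n + 1) fun b j hj => ?_⟩
    rw [strand_diff _ _ _ _ _ hj]
    simp only [hw]
    set c := strand t (n + 1) b v
    set s := sig t b with hs
    have key : ∀ j' : Fin (rk (n + 1)),
        (((∑ k : Fin (rk (n + 2)), if sub (lab (n + 2) k) s = true then
        D (n + 1) j k * H (n + 1) s k j' else 0) +
        (∑ l : Fin (rk n), if sub (lab n l) s = true then H n s j l * D n l j' else 0) : ℤ) : R) *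
        c j' = if j = j' then c j' else 0 := by
      intro j'
      by_cases hj' : sub (lab (n + 1) j') s = true
      · rw [H_D n hn s (sig_lt _ _) j j.2 j' j'.2 hj hj']
        simp only [Fin.val_inj]
        split_ifs <;> simp
      · have : c j' = 0 := strand_eq_zero _ hj'
        simp [this]
    have key2 := Finset.sum_congr (rfl : (Finset.univ : Finset (Fin (rk (n + 1)))) = _)
      fun j' _ => key j'
    rw [Finset.sum_ite_eq Finset.univ j c, if_pos (Finset.mem_univ _)] at key2
    rw [← key2]
    simp only [Int.cast_add, Int.cast_sum, add_mul, Finset.sum_mul, Finset.sum_add_distrib]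
    -- the summand `H D` of the homotopy identity vanishes because `v` is a cycle
    have z : ∑ j' : Fin (rk (n + 1)), ∑ l : Fin (rk n),
        (((if sub (lab n l) s = true then H n s j l * D n l j' else 0 : ℤ)) : R) * c j' = 0 := by
      rw [Finset.sum_comm]
      refine Finset.sum_eq_zero fun l _ => ?_
      split_ifs with hl
      · simp only [Int.cast_mul, mul_assoc]
        rw [← Finset.mul_sum, hv' b l hl, mul_zero]
      · simp
    rw [z, add_zero, Finset.sum_comm]
    refine Finset.sum_congr rfl fun k _ => ?_
    split_ifs with hk
    · simp [Finset.mul_sum, mul_assoc]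
    · simp
  · obtain ⟨m, rfl⟩ : ∃ m, n = m + 4 := ⟨n - 4, by omega⟩
    exact ⟨0, funext fun j => j.elim0⟩

/-! ### Projective resolutions and Ext -/

/-- The ideal generated by the `t`-th powers of the ten squarefree monomials. -/
noncomputable def J (R : Type) [CommRing R] (t : ℕ) : Ideal (MvPowerSeries (Fin 6) R) :=
  Ideal.span (Set.range fun j : Fin 10 => monomial (ex t (lab 1 j)) (1 : R))

/-- The augmentation of the resolution. -/
noncomputable def aug (R : Type) [CommRing R] (t : ℕ) :
    F R 0 →ₗ[MvPowerSeries (Fin 6) R] MvPowerSeries (Fin 6) R ⧸ J R t :=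
  (J R t).mkQ ∘ₗ LinearMap.proj (0 : Fin 1)

theorem diff_zero_apply (t : ℕ) (v : F R 1) (k : Fin (rk 0)) :
    diff R t 0 v k = ∑ j : Fin 10, v j * monomial (ex t (lab 1 j)) (1 : R) := by
  have h0 : ex t (lab 0 k) = 0 := by
    ext i
    have hk : k = (0 : Fin 1) := Subsingleton.elim (α := Fin 1) _ _
    subst hk
    simp [ex_apply, lab]
  simp only [diff, Matrix.mulVecLin_apply, Matrix.mulVec, dotProduct, Matrix.of_apply, h0, tsub_zero]
  refine Finset.sum_congr rfl fun j _ => ?_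
  rw [mul_comm]
  simp [D]

theorem aug_exact (t : ℕ) : Function.Exact (diff R t 0) (aug R t) := by
  intro v
  have : aug R t v = 0 ↔ v (0 : Fin 1) ∈ J R t :=
    Submodule.Quotient.mk_eq_zero (J R t)
  rw [this, J, Ideal.mem_span_range_iff_exists_fun]
  constructor
  · rintro ⟨c, hc⟩
    refine ⟨c, funext fun k => ?_⟩
    have hk : k = (0 : Fin 1) := Subsingleton.elim (α := Fin 1) _ _
    subst hk
    exact (diff_zero_apply t c _).trans hc
  · rintro ⟨c, rfl⟩
    exact ⟨c, (diff_zero_apply t c _).symm⟩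

theorem aug_surjective (t : ℕ) : Function.Surjective (aug R t) :=
  ((J R t).mkQ_surjective).comp fun a => ⟨fun _ => a, rfl⟩

/-- The resolution as a chain complex of modules. -/
noncomputable def cplx (R : Type) [CommRing R] (t : ℕ) :
    ChainComplex (ModuleCat (MvPowerSeries (Fin 6) R)) ℕ :=
  ChainComplex.of (fun n => ModuleCat.of _ (F R n)) (fun n => ModuleCat.ofHom (diff R t n))
    fun n => by
      ext1
      exact LinearMap.ext fun v => diff_diff t n v

theorem cplx_d (t n : ℕ) : (cplx R t).d (n + 1) n = ModuleCat.ofHom (diff R t n) :=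
  ChainComplex.of_d (fun n => ModuleCat.of (MvPowerSeries (Fin 6) R) (F R n))
    (fun n => ModuleCat.ofHom (diff R t n)) n

/-- The augmentation as a morphism of modules. -/
noncomputable def augHom (R : Type) [CommRing R] (t : ℕ) :
    (cplx R t).X 0 ⟶ ModuleCat.of (MvPowerSeries (Fin 6) R) (MvPowerSeries (Fin 6) R ⧸ J R t) :=
  ModuleCat.ofHom (aug R t)

theorem d_augHom (t : ℕ) : (cplx R t).d 1 0 ≫ augHom R t = 0 := by
  rw [cplx_d]
  ext1
  exact LinearMap.ext fun v => (aug_exact t _).2 ⟨v, rfl⟩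

/-- The augmentation as a morphism of chain complexes. -/
noncomputable def cplxπ (R : Type) [CommRing R] (t : ℕ) : cplx R t ⟶
    (ChainComplex.single₀ _).obj
      (ModuleCat.of (MvPowerSeries (Fin 6) R) (MvPowerSeries (Fin 6) R ⧸ J R t)) :=
  (ChainComplex.toSingle₀Equiv _ _).symm ⟨augHom R t, d_augHom t⟩

instance (t : ℕ) : QuasiIso (cplxπ R t) where
  quasiIsoAt n := by
    cases n with
    | zero =>
      rw [ChainComplex.quasiIsoAt₀_iff,
        ShortComplex.quasiIso_iff_of_zeros' _ (by exact (cplx R t).shape 0 0 (by simp)) rfl rfl]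
      constructor
      · rw [ShortComplex.moduleCat_exact_iff]
        intro v hv
        have hv' : aug R t v = 0 := by
          have e := ChainComplex.toSingle₀Equiv_symm_apply_f_zero (augHom R t) (d_augHom t)
          have := congrArg (fun f => f.hom v) e
          exact this.symm.trans hv
        obtain ⟨w, hw⟩ := (aug_exact t v).1 hv'
        refine ⟨w, ?_⟩
        rw [← hw]
        exact congrArg (fun f => f.hom w) (cplx_d (R := R) t 0)
      · have e : Epi (augHom R t) := (ModuleCat.epi_iff_surjective _).2 (aug_surjective t)
        rw [← ChainComplex.toSingle₀Equiv_symm_apply_f_zero (augHom R t) (d_augHom t)] at e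
        exact e
    | succ m =>
      rw [quasiIsoAt_iff_exactAt' (hL := ChainComplex.exactAt_succ_single_obj ..),
          HomologicalComplex.exactAt_iff' _ (m + 2) (m + 1) m (by simp) (by simp)]
      rw [ShortComplex.moduleCat_exact_iff]
      intro v hv
      obtain ⟨w, hw⟩ := diff_exact (R := R) t m v
        ((congrArg (fun f => f.hom v) (cplx_d (R := R) t m)).symm.trans hv)
      exact ⟨w, (congrArg (fun f => f.hom w) (cplx_d (R := R) t (m + 1))).trans hw⟩

/-- The projective resolution of the quotient by `J R t`. -/
noncomputable def res (R : Type) [CommRing R] (t : ℕ) :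
    ProjectiveResolution
      (ModuleCat.of (MvPowerSeries (Fin 6) R) (MvPowerSeries (Fin 6) R ⧸ J R t)) where
  complex := cplx R t
  projective n := ModuleCat.projective_of_free (Pi.basisFun (MvPowerSeries (Fin 6) R) (Fin (rk n)))
  π := cplxπ R t

/-- The last differential has the entry `2` at the extra cell, so 2 factors through it. -/
theorem two_factor (t : ℕ) : ∃ g : F R 3 →ₗ[MvPowerSeries (Fin 6) R] F R 4,
    g ∘ₗ diff R t 3 = (2 : MvPowerSeries (Fin 6) R) • LinearMap.id := by
  refine ⟨LinearMap.pi fun _ => LinearMap.proj (6 : Fin 7),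
    LinearMap.ext fun v => funext fun k => ?_⟩
  have hk : k = (0 : Fin 1) := Subsingleton.elim (α := Fin 1) _ _
  subst hk
  change diff R t 3 v (6 : Fin 7) = 2 * v (0 : Fin 1)
  simp only [diff, Matrix.mulVecLin_apply, Matrix.mulVec, dotProduct]
  refine (Fin.sum_univ_one (M := MvPowerSeries (Fin 6) R) _).trans ?_
  congr 1
  have : ex t (lab (3 + 1) ((0 : Fin 1) : ℕ)) - ex t (lab 3 ((6 : Fin 7) : ℕ)) = 0 := tsub_self _
  refine (congrArg (fun e => monomial e (((D 3 6 0 : ℤ) : R))) this).trans ?_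
  simp [D, monomial_zero_eq_C_apply, map_ofNat]

theorem two_smul_Ext (t : ℕ) (M : ModuleCat (MvPowerSeries (Fin 6) R))
    (u : ((Ext (MvPowerSeries (Fin 6) R) (ModuleCat (MvPowerSeries (Fin 6) R)) 4).obj
      (Opposite.op (ModuleCat.of (MvPowerSeries (Fin 6) R) (MvPowerSeries (Fin 6) R ⧸ J R t)))).obj M) :
    (2 : MvPowerSeries (Fin 6) R) • u = 0 := by
  let e := (res R t).isoExt (R := MvPowerSeries (Fin 6) R) 4 M
  set K := (res R t).complex.linearYonedaObj (MvPowerSeries (Fin 6) R) M with hK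
  have key : ∀ h : K.homology 4, (2 : MvPowerSeries (Fin 6) R) • h = 0 := by
    intro h
    obtain ⟨z, rfl⟩ := (ModuleCat.epi_iff_surjective (K.homologyπ 4)).1 inferInstance h
    obtain ⟨g, hg⟩ := two_factor (R := R) t
    let f : (res R t).complex.X 4 ⟶ M := K.iCycles 4 z
    let w : K.X 3 := ((ModuleCat.ofHom g : (cplx R t).X 3 ⟶ (cplx R t).X 4) ≫ f :)
    -- twice the cocycle `f` is the coboundary of `g ≫ f`
    have hz : (2 : MvPowerSeries (Fin 6) R) • z = K.toCycles 3 4 w := by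
      apply (ModuleCat.mono_iff_injective (K.iCycles 4)).1 inferInstance
      have h1 : K.iCycles 4 (K.toCycles 3 4 w) = K.d 3 4 w :=
        congrArg (fun f => f.hom w) (K.toCycles_i 3 4)
      have h2 : K.d 3 4 w = ((cplx R t).d 4 3 ≫ ModuleCat.ofHom g ≫ f :) := rfl
      rw [h1, h2, map_smul, cplx_d]
      change (2 : MvPowerSeries (Fin 6) R) • f = _
      ext v
      have h3 := congrArg (fun l => l v) hg
      have h4 : g (diff R t 3 v) = (2 : MvPowerSeries (Fin 6) R) • v := h3
      change (2 : MvPowerSeries (Fin 6) R) • f.hom v = f.hom (g (diff R t 3 v))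
      rw [h4]
      exact (f.hom.map_smul _ _).symm
    rw [← map_smul, hz]
    exact congrArg (fun f => f.hom w) (K.toCycles_comp_homologyπ 3 4)
  apply (ModuleCat.mono_iff_injective e.hom).1 inferInstance
  rw [map_smul, key, map_zero]

/-! ### Passage to the colimit -/

theorem monomial_ex_eq (τ : ℕ) (a b c : Fin 6)
    (h : ∀ i : Fin 6, (if τ.testBit i then 1 else 0) =
      (if a = i then 1 else 0) + (if b = i then 1 else 0) + (if c = i then 1 else 0)) :
    (monomial (ex 1 τ) (1 : ℤ_[2]) : A) = x a * x b * x c := by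
  have : ex 1 τ = Finsupp.single a 1 + Finsupp.single b 1 + Finsupp.single c 1 := by
    ext i
    simp only [ex_apply, Finsupp.add_apply, Finsupp.single_apply]
    exact h i
  rw [this]
  simp [x, X, monomial_mul_monomial]

theorem I_eq : I =
    Ideal.span (Set.range fun j : Fin 10 => (monomial (ex 1 (lab 1 j)) (1 : ℤ_[2]) : A)) := by
  have h : ∀ j : Fin 10, (monomial (ex 1 (lab 1 j)) (1 : ℤ_[2]) : A) =
      ![x 0 * x 1 * x 2, x 0 * x 1 * x 3, x 0 * x 2 * x 4, x 0 * x 3 * x 5,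
     x 0 * x 4 * x 5, x 1 * x 2 * x 5, x 1 * x 3 * x 4, x 1 * x 4 * x 5,
     x 2 * x 3 * x 4, x 2 * x 3 * x 5] j := by
    intro j
    fin_cases j <;> exact monomial_ex_eq _ _ _ _ (by decide)
  rw [funext h, I]
  simp only [Matrix.range_cons, Matrix.range_empty, Set.union_empty, Set.singleton_union]

theorem monomial_ex_pow (t τ : ℕ) :
    (monomial (ex t τ) (1 : ℤ_[2]) : A) = (monomial (ex 1 τ) (1 : ℤ_[2])) ^ t := by
  rw [monomial_pow, one_pow]
  congr 2
  ext i
  simp [ex_apply]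

theorem J_le (t : ℕ) : J ℤ_[2] t ≤ I ^ t := by
  rw [J, Ideal.span_le]
  rintro _ ⟨j, rfl⟩
  simp only [monomial_ex_pow t]
  refine Ideal.pow_mem_pow ?_ t
  rw [I_eq]
  exact Ideal.subset_span ⟨j, rfl⟩

theorem exists_pow_le_J (t : ℕ) : ∃ s, I ^ s ≤ J ℤ_[2] t := by
  refine Ideal.exists_pow_le_of_le_radical_of_fg ?_ ?_
  · rw [I_eq, Ideal.span_le]
    rintro _ ⟨j, rfl⟩
    refine ⟨t, ?_⟩
    simp only [← monomial_ex_pow t]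
    exact Ideal.subset_span ⟨j, rfl⟩
  · rw [I_eq]
    exact Submodule.fg_span (Set.finite_range _)

/-- Twice the transition map vanishes far enough out, because the map factors through the `Ext`
of the quotient by `J t`. -/
theorem exists_le_two_smul (t : ℕ) : ∃ (s : ℕ) (hst : t ≤ s), ∀ u,
    (2 : A) • (((localCohomology.diagram (localCohomology.idealPowersDiagram I) 4).map
      (X := op (op t)) (Y := op (op s)) (homOfLE hst).op.op).app (ModuleCat.of A A)) u = 0 := by
  obtain ⟨s₀, hs₀⟩ := exists_pow_le_J t
  let s := max s₀ t
  have hs : I ^ s ≤ J ℤ_[2] t := (Ideal.pow_le_pow_right (le_max_left _ _)).trans hs₀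
  refine ⟨s, le_max_right _ _, fun u => ?_⟩
  let p : ModuleCat.of A (A ⧸ I ^ s) ⟶ ModuleCat.of A (A ⧸ J ℤ_[2] t) :=
    ModuleCat.ofHom (Submodule.mapQ _ _ LinearMap.id hs)
  let q : ModuleCat.of A (A ⧸ J ℤ_[2] t) ⟶ ModuleCat.of A (A ⧸ I ^ t) :=
    ModuleCat.ofHom (Submodule.mapQ _ _ LinearMap.id (J_le t))
  have hpq : (localCohomology.ringModIdeals (localCohomology.idealPowersDiagram I)).map
      (X := op s) (Y := op t) (homOfLE (le_max_right s₀ t)).op = p ≫ q := by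
    ext1
    refine LinearMap.ext fun a => ?_
    obtain ⟨a, rfl⟩ := Submodule.Quotient.mk_surjective _ a
    rfl
  have : ((localCohomology.diagram (localCohomology.idealPowersDiagram I) 4).map
      (X := op (op t)) (Y := op (op s)) (homOfLE (le_max_right s₀ t)).op.op) =
      (Ext A (ModuleCat A) 4).map q.op ≫ (Ext A (ModuleCat A) 4).map p.op := by
    rw [← Functor.map_comp, ← op_comp, ← hpq]
    rfl
  rw [this]
  change (2 : A) • ((Ext A (ModuleCat A) 4).map p.op).app (ModuleCat.of A A)
    (((Ext A (ModuleCat A) 4).map q.op).app (ModuleCat.of A A) u) = 0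
  rw [← map_smul]
  refine (congrArg _ (two_smul_Ext t (ModuleCat.of A A) _)).trans (map_zero _)

/-- An endomorphism of the colimit is determined on the terms of the diagram, so it suffices that
twice the identity vanishes on each of them. -/
theorem two_smul_localCohomology
    (u : (localCohomology I 4).obj (ModuleCat.of A A)) :
    (2 : A) • u = 0 := by
  let d := localCohomology.diagram (localCohomology.idealPowersDiagram I) 4
  have := localCohomology.hasColimitDiagram (localCohomology.idealPowersDiagram I) 4
  let c := colimit.cocone d
  have hc : IsColimit (((evaluation (ModuleCat A) (ModuleCat A)).obj (ModuleCat.of A A)).mapCocone c) :=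
    isColimitOfPreserves _ (colimit.isColimit d)
  have key : (2 : A) • 𝟙 ((localCohomology I 4).obj (ModuleCat.of A A)) = 0 := by
    refine hc.hom_ext fun j => ?_
    obtain ⟨⟨t⟩⟩ := j
    obtain ⟨s, hst, h⟩ := exists_le_two_smul t
    ext v
    have w := congrArg (fun f => (f.app (ModuleCat.of A A)).hom v)
      (c.w (j' := op (op t)) (j := op (op s)) (homOfLE hst).op.op)
    change (2 : A) • (c.ι.app (op (op t))).app (ModuleCat.of A A) v = 0
    rw [← show _ = (c.ι.app (op (op t))).app (ModuleCat.of A A) v from w]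
    change (2 : A) • (c.ι.app (op (op s))).app (ModuleCat.of A A)
      ((d.map (homOfLE hst).op.op).app (ModuleCat.of A A) v) = 0
    rw [← map_smul]
    exact (congrArg _ (h v)).trans (map_zero _)
  exact congrArg (fun f => f.hom u) key

end RP2

theorem two_smul_H4_eq_zero
    (u : (localCohomology I 4).obj (ModuleCat.of A A)) :
    (2 : A) • u = 0 := by
  exact RP2.two_smul_localCohomology u
end
end

section
/- Let I ⊆ ℤ₂[[x₁,…,x₆]] be the square-free monomial ideal I = (x₁x₂x₃, x₁x₂x₄, x₁x₃x₅, x₁x₄x₆, x₁x₅x₆, x₂x₃x₆, x₂x₄x₅, x₂x₅x₆, x₃x₄x₅, x₃x₄x₆) corresponding to the standard triangulation of ℝP². Then the local cohomology module H⁵_I(ℤ₂[[x₁,…,x₆]]) vanishes: H⁵_I(ℤ₂[[x₁,…,x₆]]) = 0. -/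
/-!
The Frobenius-like powers `I^[t] = (m^t : m a generator of I)` are cofinal with the ordinary powers
of `I`, so the colimit defining `H⁵_I` may be computed along `Ext⁵(A/I^[t], -)`. Each of these
vanishes, because `A/I^[t]` has projective dimension at most `4`. The bound on the projective
dimension is `MonomialIdeal.hasProjectiveDimensionLT_of_card`: adjoining a monomial `f` to a
monomial ideal `J` gives the short exact sequence

`0 → A/(J : f) → A/J → A/(J + (f)) → 0`,

and for squarefree monomials in the `t`-th powers of the variables, `J : f` is again
such an ideal, involving only the variables not occurring in `f` (`MonomialIdeal.mul_mem_iff`,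
`MonomialIdeal.expo_tsub`). By induction, the quotient by an ideal involving at most `n` variables
has projective dimension at most `n`. As each of the ten generators is a product of three
of the six variables, the colon ideals involve at most three variables, and the sequence gives
projective dimension at most `3 + 1 = 4` for `A/I^[t]`. The coefficient ring plays no role.
-/

/-!
STATEMENT 3: For the square-free monomial ideal `I ⊆ ℤ₂[[x₁,…,x₆]]` corresponding to the
standard triangulation of ℝP², the local cohomology module `H⁵_I(ℤ₂[[x₁,…,x₆]])` vanishes.
Variables are 0-indexed: `xᵢ₊₁ = X i`.
-/

noncomputable section

open CategoryTheory Limits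

/-! ### Projective dimension of cyclic modules and vanishing of `Ext` -/

namespace QuotientSequence

universe u
variable {R : Type u} [CommRing R]

/-- The sequence `0 → R/K → R/J → R/(J + (f)) → 0`, whose first map is multiplication by `f`,
for an ideal `K` contained in the colon ideal `J : f`. -/
def shortComplex (J K : Ideal R) (f : R) (h : ∀ g ∈ K, f * g ∈ J) :
    ShortComplex (ModuleCat.{u} R) where
  X₁ := ModuleCat.of R (R ⧸ K)
  X₂ := ModuleCat.of R (R ⧸ J)
  X₃ := ModuleCat.of R (R ⧸ (J ⊔ Ideal.span {f}))
  f := ModuleCat.ofHom (Submodule.mapQ K J (LinearMap.mulLeft R f) h)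
  g := ModuleCat.ofHom (Submodule.mapQ J (J ⊔ Ideal.span {f}) LinearMap.id
    (fun _ hx => Ideal.mem_sup_left hx))
  zero := by
    rw [← ModuleCat.ofHom_comp]
    apply ModuleCat.hom_ext
    refine LinearMap.ext fun y => ?_
    obtain ⟨y, rfl⟩ := Submodule.mkQ_surjective _ y
    refine (Submodule.Quotient.mk_eq_zero _).2 ?_
    change f * y ∈ J ⊔ Ideal.span {f}
    exact Ideal.mem_sup_right (Ideal.mul_mem_right _ _ (Ideal.mem_span_singleton_self f))

lemma shortExact (J K : Ideal R) (f : R) (h : ∀ g, f * g ∈ J ↔ g ∈ K) :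
    (shortComplex J K f fun g => (h g).2).ShortExact where
  exact := by
    rw [ShortComplex.moduleCat_exact_iff]
    intro y hy
    obtain ⟨y, rfl⟩ := Submodule.mkQ_surjective _ y
    have hy' : y ∈ J ⊔ Ideal.span {f} := (Submodule.Quotient.mk_eq_zero _).1 hy
    obtain ⟨j, hj, z, hz, rfl⟩ := Submodule.mem_sup.1 hy'
    obtain ⟨a, rfl⟩ := Ideal.mem_span_singleton'.1 hz
    refine ⟨Submodule.Quotient.mk a, ?_⟩
    change (Submodule.Quotient.mk (f * a) : R ⧸ J) = Submodule.Quotient.mk (j + a * f)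
    rw [Submodule.Quotient.eq]
    have : f * a - (j + a * f) = -j := by ring
    rw [this]
    exact J.neg_mem hj
  mono_f := by
    rw [ModuleCat.mono_iff_injective, injective_iff_map_eq_zero]
    intro y hy
    obtain ⟨y, rfl⟩ := Submodule.mkQ_surjective _ y
    have hy' : f * y ∈ J := (Submodule.Quotient.mk_eq_zero _).1 hy
    exact (Submodule.Quotient.mk_eq_zero _).2 ((h y).1 hy')
  epi_g := by
    rw [ModuleCat.epi_iff_surjective]
    intro y
    obtain ⟨y, rfl⟩ := Submodule.mkQ_surjective _ y
    exact ⟨Submodule.Quotient.mk y, rfl⟩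

lemma hasProjectiveDimensionLT_sup (J K : Ideal R) (f : R) (h : ∀ g, f * g ∈ J ↔ g ∈ K) (n : ℕ)
    (hK : HasProjectiveDimensionLT (ModuleCat.of R (R ⧸ K)) n)
    (hJ : HasProjectiveDimensionLT (ModuleCat.of R (R ⧸ J)) (n + 1)) :
    HasProjectiveDimensionLT (ModuleCat.of R (R ⧸ (J ⊔ Ideal.span {f}))) (n + 1) :=
  (shortExact J K f h).hasProjectiveDimensionLT_X₃ n hK hJ

lemma hasProjectiveDimensionLT_top (n : ℕ) :
    HasProjectiveDimensionLT (ModuleCat.of R (R ⧸ (⊤ : Ideal R))) n := by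
  have : Subsingleton (R ⧸ (⊤ : Ideal R)) := Ideal.Quotient.subsingleton_iff.2 rfl
  have := (ModuleCat.isZero_of_subsingleton
    (ModuleCat.of R (R ⧸ (⊤ : Ideal R)))).hasProjectiveDimensionLT_zero
  exact hasProjectiveDimensionLT_of_ge _ 0 n (Nat.zero_le n)

lemma hasProjectiveDimensionLT_bot (n : ℕ) :
    HasProjectiveDimensionLT (ModuleCat.of R (R ⧸ (⊥ : Ideal R))) (n + 1) := by
  have : Module.Free R (R ⧸ (⊥ : Ideal R)) :=
    Module.Free.of_equiv (Submodule.quotEquivOfEqBot (⊥ : Ideal R) rfl).symm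
  have : Projective (ModuleCat.of R (R ⧸ (⊥ : Ideal R))) :=
    ModuleCat.projective_of_categoryTheory_projective _
  exact hasProjectiveDimensionLT_of_ge _ 1 (n + 1) (by lia)

end QuotientSequence

/-- The derived-functor `Ext` groups used in the definition of local cohomology vanish in degrees
above the projective dimension, which Mathlib defines through `Abelian.Ext`: both are computed by
the same complex, for any projective resolution. -/
lemma isZero_Ext_of_hasProjectiveDimensionLT {R : Type*} [CommRing R] {C : Type*} [Category* C]
    [Abelian C] [Linear R C] [EnoughProjectives C] (X Y : C) (n : ℕ)
    [HasProjectiveDimensionLT X (n + 1)] :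
    IsZero (((Ext R C (n + 1)).obj (Opposite.op X)).obj Y) := by
  let := HasExt.standard C
  let P := ProjectiveResolution.of X
  refine IsZero.of_iso ?_ (P.isoExt (n + 1) Y)
  rw [← HomologicalComplex.exactAt_iff_isZero_homology,
    HomologicalComplex.exactAt_iff' _ n (n + 1) (n + 2) (by simp) (by simp),
    ShortComplex.moduleCat_exact_iff]
  intro (f : P.complex.X (n + 1) ⟶ Y) hf
  have hf' : P.complex.d (n + 2) (n + 1) ≫ f = 0 := hf
  obtain ⟨g, hg⟩ := (P.extMk_eq_zero_iff f (n + 2) rfl hf' n rfl).1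
    (Abelian.Ext.eq_zero_of_hasProjectiveDimensionLT _ (n + 1) le_rfl)
  exact ⟨g, hg⟩

/-! ### Monomial ideals in power series rings -/

namespace MonomialIdeal

open MvPowerSeries

variable {σ k : Type} [CommRing k]

variable (k) in
/-- The ideal of `k[[σ]]` generated by the monomials with exponent vectors in `E`. -/
def monomialIdeal (E : Set (σ →₀ ℕ)) : Ideal (MvPowerSeries σ k) :=
  Ideal.span ((fun e => monomial e 1) '' E)

lemma exists_le_of_mem {E : Set (σ →₀ ℕ)} {g : MvPowerSeries σ k} (hg : g ∈ monomialIdeal k E) :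
    ∀ n, coeff n g ≠ 0 → ∃ e ∈ E, e ≤ n := by
  classical
  induction hg using Submodule.span_induction with
  | mem g hg =>
    obtain ⟨e, he, rfl⟩ := hg
    intro n hn
    rw [coeff_monomial] at hn
    exact ⟨e, he, by by_contra h; exact hn (if_neg fun h' => h h'.ge)⟩
  | zero => intro n hn; simp at hn
  | add a b _ _ ha hb =>
    intro n hn
    by_cases h : coeff n a = 0
    · exact hb n fun h' => hn (by rw [map_add, h, h', add_zero])
    · exact ha n h
  | smul a g _ hg =>
    intro n hn
    rw [smul_eq_mul, coeff_mul] at hn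
    obtain ⟨p, hp, hne⟩ := Finset.exists_ne_zero_of_sum_ne_zero hn
    obtain ⟨e, he, hle⟩ := hg p.2 (right_ne_zero_of_mul hne)
    refine ⟨e, he, hle.trans ?_⟩
    rw [← Finset.HasAntidiagonal.mem_antidiagonal.1 hp]
    exact le_add_self

/-- Finiteness of `E` matters here: it allows an infinite sum of terms, each divisible by some
generator, to be regrouped into a finite combination of the generators. -/
lemma mem_of_forall_exists_le {E : Set (σ →₀ ℕ)} (hE : E.Finite) :
    ∀ {g : MvPowerSeries σ k}, (∀ n, coeff n g ≠ 0 → ∃ e ∈ E, e ≤ n) → g ∈ monomialIdeal k E := by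
  classical
  induction E, hE using Set.Finite.induction_on with
  | empty =>
    intro g hg
    have : g = 0 := by
      ext n
      by_contra h
      obtain ⟨e, he, -⟩ := hg n h
      exact he
    rw [this]
    exact zero_mem _
  | @insert e E _ _ ih =>
    intro g hg
    -- `monomial e 1 * h` collects the terms of `g` divisible by the monomial `e`.
    let h : MvPowerSeries σ k := fun n => coeff (e + n) g
    have hh : ∀ n, coeff n h = coeff (e + n) g := fun n => rfl
    have key : g - monomial e 1 * h ∈ monomialIdeal k E := by
      refine ih fun n hn => ?_
      rw [map_sub, coeff_monomial_mul] at hn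
      split_ifs at hn with hle
      · rw [hh, add_tsub_cancel_of_le hle, one_mul, sub_self] at hn
        exact absurd rfl hn
      · rw [sub_zero] at hn
        obtain ⟨e', he', hle'⟩ := hg n hn
        rcases he' with rfl | he'
        · exact absurd hle' hle
        · exact ⟨e', he', hle'⟩
    have h1 : g - monomial e 1 * h ∈ monomialIdeal k (insert e E) :=
      Ideal.span_mono (Set.image_mono (Set.subset_insert e E)) key
    have h2 : monomial e 1 * h ∈ monomialIdeal k (insert e E) :=
      Ideal.mul_mem_right _ _ (Ideal.subset_span ⟨e, Set.mem_insert e E, rfl⟩)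
    simpa using add_mem h1 h2

/-- The colon ideal of a monomial ideal by a monomial is generated by the quotients of the
generators by their greatest common divisors with the monomial. -/
lemma mul_mem_iff {E : Set (σ →₀ ℕ)} (hE : E.Finite) (f : σ →₀ ℕ) (g : MvPowerSeries σ k) :
    monomial f 1 * g ∈ monomialIdeal k E ↔ g ∈ monomialIdeal k ((fun e => e - f) '' E) := by
  classical
  constructor
  · intro h
    refine mem_of_forall_exists_le (hE.image _) fun n hn => ?_
    obtain ⟨e, he, hle⟩ := exists_le_of_mem h (f + n) (by
      rwa [coeff_add_monomial_mul, one_mul])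
    exact ⟨e - f, ⟨e, he, rfl⟩, tsub_le_iff_left.2 hle⟩
  · intro h
    refine mem_of_forall_exists_le hE fun n hn => ?_
    rw [coeff_monomial_mul] at hn
    split_ifs at hn with hle
    · obtain ⟨_, ⟨e, he, rfl⟩, hle'⟩ := exists_le_of_mem h (n - f) (by simpa using hn)
      refine ⟨e, he, ?_⟩
      have := tsub_le_iff_left.1 hle'
      rwa [add_tsub_cancel_of_le hle] at this
    · exact absurd rfl hn

variable [DecidableEq σ]

/-- The exponent vector of `∏ i ∈ S, x_i ^ t`. -/
def expo (t : ℕ) (S : Finset σ) : σ →₀ ℕ := Finsupp.indicator S fun _ _ => t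

lemma expo_apply (t : ℕ) (S : Finset σ) (i : σ) : expo t S i = if i ∈ S then t else 0 := by
  simp [expo, Finsupp.indicator_apply]

lemma expo_tsub (t : ℕ) (S F : Finset σ) : expo t S - expo t F = expo t (S \ F) := by
  ext i
  simp only [Finsupp.tsub_apply, expo_apply, Finset.mem_sdiff]
  split_ifs <;> first | omega | tauto

lemma monomial_expo (t : ℕ) (S : Finset σ) :
    (monomial (expo t S) 1 : MvPowerSeries σ k) = ∏ i ∈ S, X i ^ t := by
  induction S using Finset.induction_on with
  | empty =>
    have : expo t (∅ : Finset σ) = 0 := by ext i; simp [expo_apply]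
    rw [this, monomial_zero_one, Finset.prod_empty]
  | insert a S ha ih =>
    have : expo t (insert a S) = Finsupp.single a t + expo t S := by
      ext i
      simp only [Finsupp.add_apply, expo_apply, Finset.mem_insert, Finsupp.single_apply]
      by_cases h : i = a
      · subst h; simp [ha]
      · simp [h, Ne.symm h]
    rw [Finset.prod_insert ha, ← ih, X_pow_eq, monomial_mul_monomial, one_mul, this]

variable (k) in
/-- The ideal of `k[[σ]]` generated by the monomials `∏ i ∈ S, x_i ^ t` for `S ∈ 𝒮`. -/
def powIdeal (t : ℕ) (𝒮 : Finset (Finset σ)) : Ideal (MvPowerSeries σ k) :=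
  monomialIdeal k (expo t '' (𝒮 : Set (Finset σ)))

lemma powIdeal_insert (t : ℕ) (F : Finset σ) (𝒮 : Finset (Finset σ)) :
    powIdeal k t (insert F 𝒮) = powIdeal k t 𝒮 ⊔ Ideal.span {monomial (expo t F) 1} := by
  rw [powIdeal, powIdeal, monomialIdeal, monomialIdeal, Finset.coe_insert, Set.image_insert_eq,
    Set.image_insert_eq, Ideal.span_insert, sup_comm]

lemma mul_mem_powIdeal_iff (t : ℕ) (F : Finset σ) (𝒮 : Finset (Finset σ))
    (g : MvPowerSeries σ k) :
    monomial (expo t F) 1 * g ∈ powIdeal k t 𝒮 ↔ g ∈ powIdeal k t (𝒮.image (· \ F)) := by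
  rw [powIdeal, mul_mem_iff (𝒮.finite_toSet.image _), powIdeal, Set.image_image,
    Finset.coe_image, Set.image_image]
  simp only [expo_tsub]

variable (k) in
/-- Projective dimension of `k[[σ]]` modulo `powIdeal k t 𝒮` is at most `#V - d`, if every
`S ∈ 𝒮` lies in `V` and has more than `d` elements. The hypothesis `hV`, removed afterwards, is the
case `d = 0` for strict subsets of `V`, without the assumption that the sets are nonempty. -/
lemma hasProjectiveDimensionLT_aux (t : ℕ) (V : Finset σ)
    (hV : ∀ W ⊂ V, ∀ 𝒮 : Finset (Finset σ), (∀ S ∈ 𝒮, S ⊆ W) → HasProjectiveDimensionLT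
      (ModuleCat.of (MvPowerSeries σ k) (MvPowerSeries σ k ⧸ powIdeal k t 𝒮)) (W.card + 1))
    (d : ℕ) (𝒮 : Finset (Finset σ)) (h𝒮 : ∀ S ∈ 𝒮, S ⊆ V ∧ d + 1 ≤ S.card) :
    HasProjectiveDimensionLT
      (ModuleCat.of (MvPowerSeries σ k) (MvPowerSeries σ k ⧸ powIdeal k t 𝒮))
      (V.card - d + 1) := by
  induction 𝒮 using Finset.induction_on with
  | empty =>
    have : powIdeal k t (∅ : Finset (Finset σ)) = ⊥ := by
      simp [powIdeal, monomialIdeal]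
    rw [this]
    exact QuotientSequence.hasProjectiveDimensionLT_bot _
  | insert F 𝒮 _ ih =>
    obtain ⟨hFV, hF⟩ := h𝒮 F (Finset.mem_insert_self _ _)
    have hFne : F.Nonempty := Finset.card_pos.1 (by lia)
    have hsub : V \ F ⊂ V := Finset.sdiff_ssubset hFV hFne
    have hcolon := hV (V \ F) hsub (𝒮.image (· \ F)) fun S hS => by
      obtain ⟨S', hS', rfl⟩ := Finset.mem_image.1 hS
      exact Finset.sdiff_subset_sdiff (h𝒮 S' (Finset.mem_insert_of_mem hS')).1 subset_rfl
    have hcard := Finset.card_sdiff_add_card_eq_card hFV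
    rw [powIdeal_insert]
    exact QuotientSequence.hasProjectiveDimensionLT_sup _ _ _ (mul_mem_powIdeal_iff t F 𝒮) _
      (hasProjectiveDimensionLT_of_ge _ ((V \ F).card + 1) (V.card - d) (by lia))
      (ih fun S hS => h𝒮 S (Finset.mem_insert_of_mem hS))

variable (k) in
/-- The quotient by an ideal generated by products of `t`-th powers of variables in `V` has
projective dimension at most the number of these variables. -/
lemma hasProjectiveDimensionLT_of_subset (t : ℕ) (V : Finset σ) :
    ∀ 𝒮 : Finset (Finset σ), (∀ S ∈ 𝒮, S ⊆ V) → HasProjectiveDimensionLT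
      (ModuleCat.of (MvPowerSeries σ k) (MvPowerSeries σ k ⧸ powIdeal k t 𝒮)) (V.card + 1) := by
  induction V using Finset.strongInduction with
  | H V hV =>
    intro 𝒮 h𝒮
    by_cases h : ∅ ∈ 𝒮
    · have : powIdeal k t 𝒮 = ⊤ := by
        rw [Ideal.eq_top_iff_one]
        exact Ideal.subset_span ⟨_, ⟨∅, h, rfl⟩, by simp [monomial_expo]⟩
      rw [this]
      exact QuotientSequence.hasProjectiveDimensionLT_top _
    · exact hasProjectiveDimensionLT_aux k t V hV 0 𝒮 fun S hS => ⟨h𝒮 S hS,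
        Finset.card_pos.2 (Finset.nonempty_iff_ne_empty.2 fun h' => h (h' ▸ hS))⟩

variable (k) in
/-- If the generators are products of `t`-th powers of more than `d` of the variables in `V`, the
quotient has projective dimension at most `#V - d`. -/
lemma hasProjectiveDimensionLT_of_card (t : ℕ) (V : Finset σ) (d : ℕ) (𝒮 : Finset (Finset σ))
    (h𝒮 : ∀ S ∈ 𝒮, S ⊆ V ∧ d + 1 ≤ S.card) :
    HasProjectiveDimensionLT
      (ModuleCat.of (MvPowerSeries σ k) (MvPowerSeries σ k ⧸ powIdeal k t 𝒮))
      (V.card - d + 1) :=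
  hasProjectiveDimensionLT_aux k t V
    (fun W _ => hasProjectiveDimensionLT_of_subset k t W) d 𝒮 h𝒮

variable (k) in
lemma powIdeal_eq_span (t : ℕ) (𝒮 : Finset (Finset σ)) :
    powIdeal k t 𝒮 = Ideal.span ((fun S => (∏ i ∈ S, X i) ^ t) '' (𝒮 : Set (Finset σ))) := by
  simp only [powIdeal, monomialIdeal, Set.image_image, monomial_expo, Finset.prod_pow]

variable (k) in
lemma powIdeal_le_pow (t : ℕ) (𝒮 : Finset (Finset σ)) :
    powIdeal k t 𝒮 ≤ powIdeal k 1 𝒮 ^ t := by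
  rw [powIdeal_eq_span, Ideal.span_le]
  rintro _ ⟨S, hS, rfl⟩
  refine Ideal.pow_mem_pow ?_ t
  rw [powIdeal_eq_span]
  exact Ideal.subset_span ⟨S, hS, pow_one _⟩

variable (k) in
lemma exists_pow_le_powIdeal (t : ℕ) (𝒮 : Finset (Finset σ)) :
    ∃ n, powIdeal k 1 𝒮 ^ n ≤ powIdeal k t 𝒮 := by
  have hfg : (powIdeal k 1 𝒮).FG := by
    rw [powIdeal_eq_span]
    exact Submodule.fg_span (𝒮.finite_toSet.image _)
  refine Ideal.exists_pow_le_of_le_radical_of_fg ?_ hfg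
  rw [powIdeal_eq_span, Ideal.span_le]
  rintro _ ⟨S, hS, rfl⟩
  refine ⟨t, ?_⟩
  rw [powIdeal_eq_span]
  exact Ideal.subset_span ⟨S, hS, by simp⟩

end MonomialIdeal

/-! ### Vanishing of local cohomology -/

/-- If the powers of `J` are cofinal with ideals `K` such that `R/K` has projective dimension at
most `n`, then `H^(n+1)_J = 0`: in the colimit defining it, every term maps to zero at
a sufficiently high power of `J`, because the transition map factors through
`Ext^(n+1)(R/K, -) = 0`. -/
lemma isZero_localCohomology {R : Type} [CommRing R] (J : Ideal R) (n : ℕ)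
    (hJ : ∀ t, ∃ K : Ideal R, ∃ s, K ≤ J ^ t ∧ J ^ s ≤ K ∧
      HasProjectiveDimensionLT (ModuleCat.of R (R ⧸ K)) (n + 1)) :
    IsZero (localCohomology J (n + 1)) := by
  change IsZero (colimit
    (localCohomology.diagram (localCohomology.idealPowersDiagram J) (n + 1)))
  rw [IsZero.iff_id_eq_zero]
  refine colimit.hom_ext fun j => ?_
  rw [Category.comp_id, comp_zero]
  obtain ⟨t⟩ := j
  obtain ⟨t⟩ := t
  obtain ⟨K, s, hK, hs, hpd⟩ := hJ t
  -- Enlarging the exponent keeps the factorization through `R/K` and gives a transition map.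
  have hst : J ^ (max s t) ≤ K := (Ideal.pow_le_pow_right (le_max_left s t)).trans hs
  let w : (Opposite.op (Opposite.op t) : ℕᵒᵖᵒᵖ) ⟶ Opposite.op (Opposite.op (max s t)) :=
    (homOfLE (le_max_right s t)).op.op
  let a : ModuleCat.of R (R ⧸ J ^ (max s t)) ⟶ ModuleCat.of R (R ⧸ K) :=
    ModuleCat.ofHom (Submodule.mapQ _ _ LinearMap.id hst)
  let b : ModuleCat.of R (R ⧸ K) ⟶ ModuleCat.of R (R ⧸ J ^ t) :=
    ModuleCat.ofHom (Submodule.mapQ _ _ LinearMap.id hK)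
  have hab : (localCohomology.ringModIdeals (localCohomology.idealPowersDiagram J)).map w.unop =
      a ≫ b := by
    apply ModuleCat.hom_ext
    refine LinearMap.ext fun y => ?_
    obtain ⟨y, rfl⟩ := Submodule.mkQ_surjective _ y
    rfl
  have hzero : (localCohomology.diagram (localCohomology.idealPowersDiagram J) (n + 1)).map w
      = 0 := by
    have h0 : IsZero ((Ext R (ModuleCat.{0} R) (n + 1)).obj
        (Opposite.op (ModuleCat.of R (R ⧸ K)))) := by
      rw [Functor.isZero_iff]
      intro Y
      exact isZero_Ext_of_hasProjectiveDimensionLT _ _ _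
    have hcomp : (Ext R (ModuleCat.{0} R) (n + 1)).map (a ≫ b).op = 0 := by
      rw [op_comp, Functor.map_comp, h0.eq_of_tgt ((Ext R _ (n + 1)).map b.op) 0, zero_comp]
    change (Ext R (ModuleCat.{0} R) (n + 1)).map
      ((localCohomology.ringModIdeals (localCohomology.idealPowersDiagram J)).map w.unop).op = 0
    rw [hab]
    exact hcomp
  have := colimit.w (localCohomology.diagram (localCohomology.idealPowersDiagram J) (n + 1)) w
  rw [hzero, zero_comp] at this
  exact this.symm

/-- The minimal nonfaces of the six-vertex triangulation of ℝP², with vertices `0, …, 5`. -/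
def nonfaces : Finset (Finset (Fin 6)) :=
  {{0, 1, 2}, {0, 1, 3}, {0, 2, 4}, {0, 3, 5}, {0, 4, 5}, {1, 2, 5}, {1, 3, 4}, {1, 4, 5},
    {2, 3, 4}, {2, 3, 5}}

lemma I_eq_powIdeal : I = MonomialIdeal.powIdeal ℤ_[2] 1 nonfaces := by
  rw [MonomialIdeal.powIdeal_eq_span, I]
  simp [nonfaces, Set.image_insert_eq, x, mul_assoc]

theorem H5_eq_zero :
    Subsingleton ((localCohomology I 5).obj (ModuleCat.of A A)) := by
  have h : IsZero (localCohomology I 5) := by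
    refine isZero_localCohomology I 4 fun t => ?_
    rw [I_eq_powIdeal]
    obtain ⟨s, hs⟩ := MonomialIdeal.exists_pow_le_powIdeal ℤ_[2] t nonfaces
    refine ⟨_, s, MonomialIdeal.powIdeal_le_pow ℤ_[2] t nonfaces, hs, ?_⟩
    -- Six variables and generators of degree `3 = 2 + 1`: the bound is `6 - 2 = 4`.
    exact MonomialIdeal.hasProjectiveDimensionLT_of_card ℤ_[2] t Finset.univ 2 nonfaces (by decide)
  exact ModuleCat.subsingleton_of_isZero ((Functor.isZero_iff _).1 h _)
end
end

section
/- Let A be a commutative Noetherian ring, let 𝔞 ⊆ A be an ideal, and let A[[z]] be the formal power series ring in one variable over A. Then for every i ≥ 0 there is an isomorphism of abelian groups H^{i+1}_{𝔞A[[z]] + (z)}(A[[z]]) ≅ H^i_𝔞(A) ⊗_ℤ H¹_{(z)}(ℤ[[z]]). -/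
/-!
Write `S = A⟦X⟧` and `K = 𝔞 S + (X)`. Both sides of the asserted isomorphism are direct sums of
countably many copies of `H^i_𝔞(A)`.

On the one hand, `X ∈ K` acts bijectively on the Laurent series `A((X)) = S_X`, so that
`H^j_K(A((X))) = 0` for all `j`, and the long exact sequence of
`0 ⟶ S ⟶ A((X)) ⟶ S_X / S ⟶ 0` gives `H^{i+1}_K(S) ≅ H^i_K(S_X / S)` (`lc_powerSeries`). The module
`S_X / S` is identified, by the residue pairing `resMap`, with `tors A A`. Here, for an `A`-module
`M`, `tors A M` is the `S`-module of the `A`-linear maps `S ⟶ M` that vanish on some `X ^ N S`; as a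
group it consists of the finitely supported sequences in `M` (`torsEquiv`).

On the other hand, `H^i_K(tors A M)` is the group of finitely supported sequences in `H^i_𝔞(M)`
(`lc_tors`). For `i = 0` this compares torsion elements (`tors_sections`), since `H^0_J` is the
`J`-power torsion (`lc_zero_exists`). Higher degrees follow by dimension shifting, because `tors A` is
exact and preserves injective modules (`tors_injective`, by Baer's criterion and the Artin–Rees
lemma).

For `A = ℤ`, `𝔞 = 0` and `i = 0` this computes `H^1_{(X)}(ℤ⟦X⟧)` as a free abelian group of countable
rank (`lc_int`), and tensoring with it produces a direct sum of countably many copies.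

Local cohomology is the filtered colimit of the modules `Ext^i(R/J^t, M)`, and its long exact sequence
(`lc_exists_delta`) is obtained from that of `Ext` in the second variable. As `Ext` is computed by
projective resolutions of the first variable, the latter is the homology sequence of a short exact
sequence of complexes (`exists_delta`).
-/

noncomputable section

universe u

namespace LocalCohomologyPowerSeries

open CategoryTheory Limits

/-! ### Long exact sequences of left derived functors -/

section DerivedSequence

variable {C : Type*} [Category* C] {D : Type*} [Category* D]
  [Abelian C] [Abelian D]

/-- The short complex of chain complexes `F K ⟶ G K ⟶ H K` obtained by applying degreewise two
composable natural transformations of additive functors with zero composite. -/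
def derSC {F G H : C ⥤ D} [F.Additive] [G.Additive] [H.Additive] (α : F ⟶ G) (β : G ⟶ H)
    (w : α ≫ β = 0) (K : ChainComplex C ℕ) : ShortComplex (ChainComplex D ℕ) :=
  ShortComplex.mk ((NatTrans.mapHomologicalComplex α _).app K)
    ((NatTrans.mapHomologicalComplex β _).app K) (by
      ext n
      exact congr_app w _)

/-- Functoriality of `derSC` in the chain complex `K`. -/
def derSCMap {F G H : C ⥤ D} [F.Additive] [G.Additive] [H.Additive] (α : F ⟶ G) (β : G ⟶ H)
    (w : α ≫ β = 0) {K L : ChainComplex C ℕ} (φ : K ⟶ L) :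
    derSC α β w K ⟶ derSC α β w L where
  τ₁ := (F.mapHomologicalComplex _).map φ
  τ₂ := (G.mapHomologicalComplex _).map φ
  τ₃ := (H.mapHomologicalComplex _).map φ
  comm₁₂ := (NatTrans.mapHomologicalComplex α _).naturality φ
  comm₂₃ := (NatTrans.mapHomologicalComplex β _).naturality φ

lemma derSC_shortExact {F G H : C ⥤ D} [F.Additive] [G.Additive] [H.Additive] (α : F ⟶ G)
    (β : G ⟶ H) (w : α ≫ β = 0)
    (hex : ∀ (P : C) [Projective P],
      (ShortComplex.mk (α.app P) (β.app P) (congr_app w P)).ShortExact)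
    {X : C} (P : ProjectiveResolution X) : (derSC α β w P.complex).ShortExact := by
  apply HomologicalComplex.shortExact_of_degreewise_shortExact
  intro n
  exact hex (P.complex.X n)

variable [HasProjectiveResolutions C]

/-- If `0 ⟶ F ⟶ G ⟶ H ⟶ 0` is exact on projective objects, the left derived functors sit in a long
exact sequence. Its connecting maps are natural in the object; they come from the homology sequence
of the short exact sequence of complexes obtained from a projective resolution. -/
theorem exists_delta {F G H : C ⥤ D} [F.Additive] [G.Additive] [H.Additive] (α : F ⟶ G)
    (β : G ⟶ H) (w : α ≫ β = 0)
    (hex : ∀ (P : C) [Projective P],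
      (ShortComplex.mk (α.app P) (β.app P) (congr_app w P)).ShortExact) (n : ℕ) :
    ∃ δ : H.leftDerived (n + 1) ⟶ F.leftDerived n,
      ∀ X, ∃ (h1 : (NatTrans.leftDerived β (n + 1)).app X ≫ δ.app X = 0)
        (h2 : δ.app X ≫ (NatTrans.leftDerived α n).app X = 0),
        (ShortComplex.mk _ _ h1).Exact ∧ (ShortComplex.mk _ _ h2).Exact := by
  have hS := fun X : C => derSC_shortExact α β w hex (projectiveResolution X)
  have hij : (ComplexShape.down ℕ).Rel (n + 1) n := by simp
  let c := ComplexShape.down ℕ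
  let Hf := HomologicalComplex.homologyFunctor D c
  -- the connecting maps, with source and target written as values of homology functors
  let d : ∀ X : C, (Hf (n + 1)).obj ((H.mapHomologicalComplex c).obj
      (projectiveResolution X).complex) ⟶ (Hf n).obj ((F.mapHomologicalComplex c).obj
      (projectiveResolution X).complex) := fun X => (hS X).δ (n + 1) n hij
  have dnat : ∀ {X Y : C} (φ : (projectiveResolution X).complex ⟶
      (projectiveResolution Y).complex), d X ≫ (Hf n).map ((F.mapHomologicalComplex c).map φ) =
        (Hf (n + 1)).map ((H.mapHomologicalComplex c).map φ) ≫ d Y := fun {X Y} φ =>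
    HomologicalComplex.HomologySequence.δ_naturality
          (derSCMap α β w φ) (hS X) (hS Y) (n + 1) n hij
  have dz1 : ∀ X : C, (Hf (n + 1)).map ((NatTrans.mapHomologicalComplex β c).app
      (projectiveResolution X).complex) ≫ d X = 0 := fun X => (hS X).comp_δ (n + 1) n hij
  have dz2 : ∀ X : C, d X ≫ (Hf n).map ((NatTrans.mapHomologicalComplex α c).app
      (projectiveResolution X).complex) = 0 := fun X => (hS X).δ_comp (n + 1) n hij
  have de1 : ∀ X, (ShortComplex.mk _ _ (dz1 X)).Exact :=
    fun X => (hS X).homology_exact₃ (n + 1) n hij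
  have de2 : ∀ X, (ShortComplex.mk _ _ (dz2 X)).Exact :=
    fun X => (hS X).homology_exact₁ (n + 1) n hij
  clear_value d
  let δ : H.leftDerived (n + 1) ⟶ F.leftDerived n :=
    { app X := ((projectiveResolution X).isoLeftDerivedObj H (n + 1)).hom ≫
        d X ≫ ((projectiveResolution X).isoLeftDerivedObj F n).inv
      naturality {X Y} f := by
        let φ := ProjectiveResolution.lift f (projectiveResolution X) (projectiveResolution Y)
        have comm : φ.f 0 ≫ (projectiveResolution Y).π.f 0 =
          (projectiveResolution X).π.f 0 ≫ f :=
          ProjectiveResolution.lift_commutes_zero f _ _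
        have e1 := ProjectiveResolution.isoLeftDerivedObj_hom_naturality f _ _ φ comm H (n + 1)
        have e2 := ProjectiveResolution.isoLeftDerivedObj_inv_naturality f _ _ φ comm F n
        rw [Category.assoc, Category.assoc, e2, reassoc_of% e1]
        exact congrArg (fun t => _ ≫ t) ((reassoc_of% (dnat φ)) _).symm }
  refine ⟨δ, fun X => ?_⟩
  have a1 := (projectiveResolution X).leftDerived_app_eq α n
  have b1 := (projectiveResolution X).leftDerived_app_eq β (n + 1)
  have h1 : (NatTrans.leftDerived β (n + 1)).app X ≫ δ.app X = 0 := by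
    rw [b1]
    simp only [δ, Category.assoc, Iso.inv_hom_id_assoc]
    rw [reassoc_of% (dz1 X)]
    simp
  have h2 : δ.app X ≫ (NatTrans.leftDerived α n).app X = 0 := by
    rw [a1]
    simp only [δ, Category.assoc, Iso.inv_hom_id_assoc]
    rw [reassoc_of% (dz2 X)]
    simp
  refine ⟨h1, h2, ?_, ?_⟩
  · refine (ShortComplex.exact_iff_of_iso ?_).2 (de1 X)
    refine ShortComplex.isoMk ((projectiveResolution X).isoLeftDerivedObj G (n + 1))
      ((projectiveResolution X).isoLeftDerivedObj H (n + 1))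
      ((projectiveResolution X).isoLeftDerivedObj F n) ?_ ?_
    · dsimp only
      rw [b1, Category.assoc, Category.assoc, Iso.inv_hom_id, Category.comp_id]
    · simp only [δ, Category.assoc, Iso.inv_hom_id, Category.comp_id]
  · refine (ShortComplex.exact_iff_of_iso ?_).2 (de2 X)
    refine ShortComplex.isoMk  ((projectiveResolution X).isoLeftDerivedObj H (n + 1))
      ((projectiveResolution X).isoLeftDerivedObj F n)
      ((projectiveResolution X).isoLeftDerivedObj G n) ?_ ?_
    · simp only [δ, Category.assoc, Iso.inv_hom_id, Category.comp_id]
    · dsimp only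
      rw [a1, Category.assoc, Category.assoc, Iso.inv_hom_id, Category.comp_id]

end DerivedSequence

/-! ### Vanishing and degree zero of left derived functors -/

section DerivedVanishing

variable {C : Type*} [Category* C] {D : Type*} [Category* D]
  [Abelian C] [HasProjectiveResolutions C] [Abelian D]

/-- The higher derived functors of an exact functor vanish. -/
lemma isZero_leftDerived_succ (F : C ⥤ D) [F.Additive] [F.PreservesHomology] (n : ℕ) (X : C) :
    IsZero ((F.leftDerived (n + 1)).obj X) := by
  let P := projectiveResolution X
  refine IsZero.of_iso ?_ (P.isoLeftDerivedObj F (n + 1))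
  refine (HomologicalComplex.exactAt_iff_isZero_homology
    ((F.mapHomologicalComplex (ComplexShape.down ℕ)).obj P.complex) (n + 1)).1 ?_
  exact (P.complex_exactAt_succ n).map F

/-- If a natural endomorphism `e` of the identity functor is zero on `X` but becomes invertible after
applying `F`, then all left derived functors of `F` vanish on `X`: applied to a resolution of `X`,
`e` is a lift of `0` that induces an isomorphism on homology. -/
lemma isZero_leftDerived_of_isIso (F : C ⥤ D) [F.Additive] {X : C} (e : 𝟭 C ⟶ 𝟭 C)
    (he : e.app X = 0) (hF : ∀ Y, IsIso (F.map (e.app Y))) (n : ℕ) :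
    IsZero ((F.leftDerived n).obj X) := by
  let P := projectiveResolution X
  let φ : P.complex ⟶ P.complex :=
    { f i := e.app (P.complex.X i)
      comm' i j _ := (e.naturality (P.complex.d i j)).symm }
  have comm : φ.f 0 ≫ P.π.f 0 = P.π.f 0 ≫ e.app X := (e.naturality (P.π.f 0)).symm
  have h := P.isoLeftDerivedObj_hom_naturality _ P φ comm F n
  have : IsIso ((F.mapHomologicalComplex (ComplexShape.down ℕ)).map φ) := by
    have : ∀ i, IsIso (((F.mapHomologicalComplex (ComplexShape.down ℕ)).map φ).f i) :=
      fun i => hF _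
    exact HomologicalComplex.Hom.isIso_of_components _
  have h3 : IsIso ((F.mapHomologicalComplex _ ⋙
      HomologicalComplex.homologyFunctor D (ComplexShape.down ℕ) n).map φ) := by
    rw [Functor.comp_map]; infer_instance
  rw [he] at h
  -- `0` and `φ` both lift the zero endomorphism of `X`
  have h0 := P.isoLeftDerivedObj_hom_naturality (0 : X ⟶ X) P 0
    (zero_comp.trans comp_zero.symm) F n
  rw [h0, cancel_epi] at h
  rw [← h, Functor.map_zero] at h3
  exact (@IsZero.of_mono_zero _ _ _ _ _ (@IsIso.mono_of_iso _ _ _ _ _ h3)).of_iso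
    (P.isoLeftDerivedObj F n)

lemma fromLeftDerivedZero_naturality {F G : C ⥤ D} [F.Additive] [G.Additive] (α : F ⟶ G) (X : C) :
    (NatTrans.leftDerived α 0).app X ≫ G.fromLeftDerivedZero.app X =
      F.fromLeftDerivedZero.app X ≫ α.app X := by
  rw [(projectiveResolution X).leftDerived_app_eq α,
    (projectiveResolution X).fromLeftDerivedZero_eq F,
    (projectiveResolution X).fromLeftDerivedZero_eq G]
  simp only [Category.assoc, Iso.inv_hom_id_assoc]
  congr 1
  have h1 := HomologicalComplex.homologyι_naturality
    ((NatTrans.mapHomologicalComplex α (ComplexShape.down ℕ)).app (projectiveResolution X).complex) 0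
  have h2 : HomologicalComplex.opcyclesMap ((NatTrans.mapHomologicalComplex α
      (ComplexShape.down ℕ)).app (projectiveResolution X).complex) 0 ≫
        (projectiveResolution X).fromLeftDerivedZero' G =
      (projectiveResolution X).fromLeftDerivedZero' F ≫ α.app X := by
    rw [← cancel_epi (HomologicalComplex.pOpcycles _ _),
      ProjectiveResolution.pOpcycles_comp_fromLeftDerivedZero'_assoc,
      HomologicalComplex.p_opcyclesMap_assoc,
      ProjectiveResolution.pOpcycles_comp_fromLeftDerivedZero']
    exact (α.naturality _).symm
  exact ((reassoc_of% h1) _).trans ((congrArg (_ ≫ ·) h2).trans (Category.assoc _ _ _).symm)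

end DerivedVanishing

/-! ### `Ext` in the category of modules -/

section Ext

open Opposite
variable {R : Type u} [CommRing R]

/-- The contravariant functor `Hom(-, M)`, written as a covariant functor to the opposite category.
Mathlib's `Ext` is defined by its left derived functors. -/
abbrev homTo (M : ModuleCat.{u} R) : ModuleCat.{u} R ⥤ (ModuleCat.{u} R)ᵒᵖ :=
  ((linearYoneda R (ModuleCat.{u} R)).obj M).rightOp

instance (M : ModuleCat.{u} R) : PreservesFiniteLimits ((linearYoneda R (ModuleCat.{u} R)).obj M) := by
  have : PreservesLimits ((linearYoneda R (ModuleCat.{u} R)).obj M ⋙ forget _) :=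
    inferInstanceAs (PreservesLimits (yoneda.obj M))
  have := preservesLimits_of_reflects_of_preserves
    ((linearYoneda R (ModuleCat.{u} R)).obj M) (forget _)
  infer_instance

instance (M : ModuleCat.{u} R) : PreservesFiniteColimits (homTo M) :=
  preservesFiniteColimits_rightOp _

lemma isZero_Ext_of_injective (I : ModuleCat.{u} R) [Injective I] (n : ℕ) (X : (ModuleCat.{u} R)ᵒᵖ) :
    IsZero (((Ext R (ModuleCat.{u} R) (n + 1)).obj X).obj I) := by
  have : (homTo I).PreservesMonomorphisms := ⟨fun {X Y} f hf => by
    have : Epi (((linearYoneda R (ModuleCat.{u} R)).obj I).map f.op) := by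
      rw [ModuleCat.epi_iff_surjective]
      intro g
      exact ⟨Injective.factorThru (show X ⟶ I from g) f, Injective.comp_factorThru (show X ⟶ I from g) f⟩
    exact inferInstanceAs (Mono (((linearYoneda R (ModuleCat.{u} R)).obj I).map f.op).op)⟩
  have := Functor.preservesHomology_of_preservesMonos_and_cokernels (homTo I)
  exact (isZero_leftDerived_succ (homTo I) n X.unop).unop

/-- If `r` kills `X` and acts bijectively on `M`, then `Ext^n(X, M) = 0`. -/
lemma isZero_Ext_of_smul (M X : ModuleCat.{u} R) (r : R) (hX : ∀ x : X, r • x = 0)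
    (hM : Function.Bijective fun m : M => r • m) (n : ℕ) :
    IsZero (((Ext R (ModuleCat.{u} R) n).obj (op X)).obj M) := by
  let e : 𝟭 (ModuleCat.{u} R) ⟶ 𝟭 _ :=
    { app X := r • 𝟙 X
      naturality X Y f := by
        dsimp only [Functor.id_obj, Functor.id_map]
        rw [Linear.comp_smul, Linear.smul_comp, Category.comp_id, Category.id_comp] }
  refine (isZero_leftDerived_of_isIso (homTo M) (X := X) e ?_ ?_ n).unop
  · ext x; exact hX x
  · intro Y
    have : IsIso (r • 𝟙 M) := by
      rw [ConcreteCategory.isIso_iff_bijective]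
      exact hM
    have : IsIso (((linearYoneda R (ModuleCat.{u} R)).obj M).map (e.app Y).op) := by
      rw [ConcreteCategory.isIso_iff_bijective]
      have h : ∀ g : Y ⟶ M, (r • 𝟙 Y) ≫ g = g ≫ (r • 𝟙 M) := by intro g; simp
      constructor
      · intro f g hfg
        have h2 : (r • 𝟙 Y) ≫ (show Y ⟶ M from f) = (r • 𝟙 Y) ≫ (show Y ⟶ M from g) := hfg
        rw [h, h, cancel_mono] at h2
        exact h2
      · intro f
        refine ⟨((show Y ⟶ M from f) ≫ inv (r • 𝟙 M)), ?_⟩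
        refine (h ((show Y ⟶ M from f) ≫ inv (r • 𝟙 M))).trans ?_
        rw [Category.assoc, IsIso.inv_hom_id, Category.comp_id]
    exact inferInstanceAs (IsIso (((linearYoneda R (ModuleCat.{u} R)).obj M).map (e.app Y).op).op)

lemma comp_comp_eq_zero (S : ShortComplex (ModuleCat.{u} R)) {P : ModuleCat.{u} R} (f : P ⟶ S.X₁) :
    (f ≫ S.f) ≫ S.g = 0 := by rw [Category.assoc, S.zero, comp_zero]

/-- Applying `Hom(P, -)` to a short complex. -/
def homSC (P : ModuleCat.{u} R) (S : ShortComplex (ModuleCat.{u} R)) :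
    ShortComplex (ModuleCat.{u} R) :=
  ShortComplex.mk (((linearYoneda R (ModuleCat.{u} R)).map S.f).app (op P))
    (((linearYoneda R (ModuleCat.{u} R)).map S.g).app (op P)) (by
      ext f : 2
      exact comp_comp_eq_zero S f)

lemma homSC_shortExact (P : ModuleCat.{u} R) [Projective P]
    (S : ShortComplex (ModuleCat.{u} R)) (hS : S.ShortExact) : (homSC P S).ShortExact := by
  have := hS.mono_f
  have := hS.epi_g
  refine { exact := ?_, mono_f := ?_, epi_g := ?_ }
  · rw [ShortComplex.moduleCat_exact_iff]
    intro (f : P ⟶ S.X₂) (hf : f ≫ S.g = 0)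
    exact ⟨hS.exact.lift f hf, hS.exact.lift_f f hf⟩
  · rw [ModuleCat.mono_iff_injective]
    intro (f : P ⟶ S.X₁) (g : P ⟶ S.X₁) (hfg : f ≫ S.f = g ≫ S.f)
    exact (cancel_mono _).1 hfg
  · rw [ModuleCat.epi_iff_surjective]
    intro (f : P ⟶ S.X₃)
    exact ⟨Projective.factorThru f S.g, Projective.factorThru_comp f S.g⟩

/-- The long exact sequence of `Ext` in the second variable, with connecting maps natural in the
first variable. -/
lemma Ext_exists_delta (S : ShortComplex (ModuleCat.{u} R)) (hS : S.ShortExact) (n : ℕ) :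
    ∃ δ : ∀ X : (ModuleCat.{u} R)ᵒᵖ, ((Ext R (ModuleCat.{u} R) n).obj X).obj S.X₃ ⟶
        ((Ext R (ModuleCat.{u} R) (n + 1)).obj X).obj S.X₁,
      (∀ {X Y} (f : X ⟶ Y), ((Ext R (ModuleCat.{u} R) n).map f).app S.X₃ ≫ δ Y =
        δ X ≫ ((Ext R (ModuleCat.{u} R) (n + 1)).map f).app S.X₁) ∧
      (∀ X, Function.Exact (((Ext R (ModuleCat.{u} R) n).obj X).map S.g) (δ X)) ∧
      (∀ X, Function.Exact (δ X) (((Ext R (ModuleCat.{u} R) (n + 1)).obj X).map S.f)) := by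
  let α : homTo S.X₃ ⟶ homTo S.X₂ := NatTrans.rightOp ((linearYoneda R (ModuleCat.{u} R)).map S.g)
  let β : homTo S.X₂ ⟶ homTo S.X₁ := NatTrans.rightOp ((linearYoneda R (ModuleCat.{u} R)).map S.f)
  have w : α ≫ β = 0 := by
    ext X : 2
    refine Quiver.Hom.unop_inj ?_
    ext f : 2
    exact comp_comp_eq_zero S f
  have hex : ∀ (P : ModuleCat.{u} R) [Projective P],
      (ShortComplex.mk (α.app P) (β.app P) (congr_app w P)).ShortExact := by
    intro P _
    exact (homSC_shortExact P S hS).op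
  obtain ⟨δ, hδ⟩ := exists_delta α β w hex n
  refine ⟨fun X => (δ.app X.unop).unop, ?_, ?_, ?_⟩
  · intro X Y f
    exact congrArg Quiver.Hom.unop (δ.naturality f.unop).symm
  · intro X
    obtain ⟨h1, h2, e1, e2⟩ := hδ X.unop
    exact (ShortComplex.ShortExact.moduleCat_exact_iff_function_exact _).1 e2.unop
  · intro X
    obtain ⟨h1, h2, e1, e2⟩ := hδ X.unop
    exact (ShortComplex.ShortExact.moduleCat_exact_iff_function_exact _).1 e1.unop

/-- `Ext^0` is `Hom`, naturally in both variables. -/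
lemma Ext_zero_exists :
    ∃ θ : ∀ (X : (ModuleCat.{u} R)ᵒᵖ) (M : ModuleCat.{u} R),
      ((Ext R (ModuleCat.{u} R) 0).obj X).obj M ≃ₗ[R] (X.unop ⟶ M),
      (∀ {X Y} (f : X ⟶ Y) M x,
        θ Y M (((Ext R (ModuleCat.{u} R) 0).map f).app M x) = f.unop ≫ θ X M x) ∧
      (∀ X {M N} (f : M ⟶ N) x,
        θ X N (((Ext R (ModuleCat.{u} R) 0).obj X).map f x) = θ X M x ≫ f) := by
  let a : ∀ (X : (ModuleCat.{u} R)ᵒᵖ) (M : ModuleCat.{u} R),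
      ((linearYoneda R (ModuleCat.{u} R)).obj M).obj X ⟶
        ((Ext R (ModuleCat.{u} R) 0).obj X).obj M :=
    fun X M => ((homTo M).fromLeftDerivedZero.app X.unop).unop
  have ha : ∀ X M, Function.Bijective (a X M) := fun X M =>
    (ConcreteCategory.isIso_iff_bijective _).1
      (inferInstanceAs (IsIso ((homTo M).fromLeftDerivedZero.app X.unop).unop))
  have h1 : ∀ {X Y} (f : X ⟶ Y) (M) (x : X.unop ⟶ M),
      ((Ext R (ModuleCat.{u} R) 0).map f).app M (a X M x) = a Y M (f.unop ≫ x) := by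
    intro X Y f M x
    have := congrArg Quiver.Hom.unop ((homTo M).fromLeftDerivedZero.naturality f.unop)
    exact ConcreteCategory.congr_hom this x
  have h2 : ∀ X {M N} (f : M ⟶ N) (x : X.unop ⟶ M),
      ((Ext R (ModuleCat.{u} R) 0).obj X).map f (a X M x) = a X N (x ≫ f) := by
    intro X M N f x
    have := congrArg Quiver.Hom.unop (fromLeftDerivedZero_naturality
      (NatTrans.rightOp ((linearYoneda R (ModuleCat.{u} R)).map f)) X.unop)
    exact ConcreteCategory.congr_hom this x
  clear_value a
  let e : ∀ X M, (X.unop ⟶ M) ≃ₗ[R] ((Ext R (ModuleCat.{u} R) 0).obj X).obj M :=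
    fun X M => LinearEquiv.ofBijective (a X M).hom (ha X M)
  have he : ∀ X M (x : X.unop ⟶ M), e X M x = a X M x := fun _ _ _ => rfl
  clear_value e
  refine ⟨fun X M => (e X M).symm, ?_, ?_⟩
  · intro X Y f M x
    obtain ⟨x, rfl⟩ := (e X M).surjective x
    rw [LinearEquiv.symm_apply_apply, LinearEquiv.symm_apply_eq, he, he, h1]
  · intro X M N f x
    obtain ⟨x, rfl⟩ := (e X M).surjective x
    rw [LinearEquiv.symm_apply_apply, LinearEquiv.symm_apply_eq, he, he, h2]

end Ext

/-! ### Local cohomology as a filtered colimit of `Ext` -/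

section LocalCohomologySequence

open Opposite
variable {R : Type u} [CommRing R] (J : Ideal R)

/-- The system of modules `Ext^i(R/J^t, M)`, indexed by `t`. The index category is `(ℕᵒᵖ)ᵒᵖ`
because Mathlib's ideal power diagram is indexed by `ℕᵒᵖ` and `Ext` is contravariant. -/
abbrev lcDiagram (i : ℕ) (M : ModuleCat.{u} R) : (ℕᵒᵖ)ᵒᵖ ⥤ ModuleCat.{u} R :=
  localCohomology.diagram (localCohomology.idealPowersDiagram J) i ⋙ (evaluation _ _).obj M

/-- `H^i_J(M)` as a cocone under the modules `Ext^i(R/J^t, M)`. -/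
def lcCocone (i : ℕ) (M : ModuleCat.{u} R) : Cocone (lcDiagram J i M) :=
  ((evaluation _ _).obj M).mapCocone (colimit.cocone
    (localCohomology.diagram (localCohomology.idealPowersDiagram J) i))

/-- `H^i_J(M)` is the colimit of the modules `Ext^i(R/J^t, M)`. -/
def lcIsColimit (i : ℕ) (M : ModuleCat.{u} R) : IsColimit (lcCocone J i M) :=
  isColimitOfPreserves ((evaluation _ _).obj M) (colimit.isColimit
    (localCohomology.diagram (localCohomology.idealPowersDiagram J) i))

/-- The map induced by `f : M ⟶ N` on the systems `Ext^i(R/J^t, -)`. -/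
def lcDiagramMap (i : ℕ) {M N : ModuleCat.{u} R} (f : M ⟶ N) :
    lcDiagram J i M ⟶ lcDiagram J i N :=
  Functor.whiskerLeft (localCohomology.diagram (localCohomology.idealPowersDiagram J) i)
    ((evaluation _ _).map f)

/-- The canonical map `Ext^i(R/J^t, M) ⟶ H^i_J(M)`. -/
def lcι (i : ℕ) (M : ModuleCat.{u} R) (t : (ℕᵒᵖ)ᵒᵖ) :
    (lcDiagram J i M).obj t ⟶ (localCohomology J i).obj M := (lcCocone J i M).ι.app t

lemma lcι_map (i : ℕ) {M N : ModuleCat.{u} R} (f : M ⟶ N) (t : (ℕᵒᵖ)ᵒᵖ) :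
    lcι J i M t ≫ (localCohomology J i).map f = (lcDiagramMap J i f).app t ≫ lcι J i N t :=
  ((colimit.ι (localCohomology.diagram (localCohomology.idealPowersDiagram J) i) t).naturality
    f).symm

lemma lcι_w (i : ℕ) (M : ModuleCat.{u} R) {t s : (ℕᵒᵖ)ᵒᵖ} (a : t ⟶ s) :
    (lcDiagram J i M).map a ≫ lcι J i M s = lcι J i M t := (lcCocone J i M).w a

instance : PreservesColimitsOfShape (ℕᵒᵖ)ᵒᵖ (forget (ModuleCat.{u} R)) :=
  have := preservesSmallestFilteredColimits_of_preservesFilteredColimits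
    (forget (ModuleCat.{u} R))
  PreservesFilteredColimitsOfSize.preserves_filtered_colimits _

lemma lcι_surj (i : ℕ) (M : ModuleCat.{u} R) (x : (localCohomology J i).obj M) :
    ∃ t y, lcι J i M t y = x :=
  Concrete.isColimit_exists_rep _ (lcIsColimit J i M) x

lemma lcι_eq_iff (i : ℕ) (M : ModuleCat.{u} R) (t) (x y : (lcDiagram J i M).obj t) :
    lcι J i M t x = lcι J i M t y ↔
      ∃ (s : _) (a : t ⟶ s), (lcDiagram J i M).map a x = (lcDiagram J i M).map a y :=
  IsColimit.eq_iff' (lcIsColimit J i M) x y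

lemma lcι_eq_zero_iff (i : ℕ) (M : ModuleCat.{u} R) (t) (x : (lcDiagram J i M).obj t) :
    lcι J i M t x = 0 ↔ ∃ (s : _) (a : t ⟶ s), (lcDiagram J i M).map a x = 0 := by
  have := lcι_eq_iff J i M t x 0
  simpa using this

lemma subsingleton_lc (i : ℕ) (M : ModuleCat.{u} R)
    (h : ∀ t : ℕ, IsZero (((Ext R (ModuleCat.{u} R) i).obj
      (op (ModuleCat.of R (R ⧸ J ^ t)))).obj M)) : Subsingleton ((localCohomology J i).obj M) := by
  suffices ∀ x : (localCohomology J i).obj M, x = 0 from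
    ⟨fun x y => (this x).trans (this y).symm⟩
  intro x
  obtain ⟨t, y, rfl⟩ := lcι_surj J i M x
  have : Subsingleton ((lcDiagram J i M).obj t) := ModuleCat.subsingleton_of_isZero (h t.unop.unop)
  rw [Subsingleton.elim y 0, map_zero]

lemma subsingleton_lc_of_injective (i : ℕ) (I : ModuleCat.{u} R) [Injective I] :
    Subsingleton ((localCohomology J (i + 1)).obj I) :=
  subsingleton_lc J _ _ fun _ => isZero_Ext_of_injective _ _ _

/-- Local cohomology with support in `J` vanishes, in all degrees, on a module on which some element
of `J` acts bijectively. -/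
lemma subsingleton_lc_of_smul (i : ℕ) (M : ModuleCat.{u} R) (r : R) (hr : r ∈ J)
    (hM : Function.Bijective fun m : M => r • m) : Subsingleton ((localCohomology J i).obj M) := by
  refine subsingleton_lc J _ _ fun t => isZero_Ext_of_smul _ _ (r ^ t) ?_ ?_ _
  · intro (x : R ⧸ J ^ t)
    obtain ⟨x, rfl⟩ := Ideal.Quotient.mk_surjective x
    exact Ideal.Quotient.eq_zero_iff_mem.2 (Ideal.mul_mem_right _ _ (Ideal.pow_mem_pow hr t))
  · have : (fun m : M => r ^ t • m) = (fun m : M => r • m)^[t] := by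
      rw [smul_iterate]
    rw [this]
    exact hM.iterate t

/-- The exact sequence `H^n_J(X₂) ⟶ H^n_J(X₃) ⟶ H^{n+1}_J(X₁) ⟶ H^{n+1}_J(X₂)` of a short exact
sequence, as the filtered colimit of the exact sequences of `Ext`. -/
theorem lc_exists_delta (S : ShortComplex (ModuleCat.{u} R)) (hS : S.ShortExact) (n : ℕ) :
    ∃ δ : (localCohomology J n).obj S.X₃ ⟶ (localCohomology J (n + 1)).obj S.X₁,
      Function.Exact ((localCohomology J n).map S.g) δ ∧
      Function.Exact δ ((localCohomology J (n + 1)).map S.f) := by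
  obtain ⟨δ, hnat, hex1, hex2⟩ := Ext_exists_delta S hS n
  let d : lcDiagram J n S.X₃ ⟶ lcDiagram J (n + 1) S.X₁ :=
    { app t := δ _
      naturality t s a := hnat _ }
  have hd1 : ∀ t, Function.Exact ((lcDiagramMap J n S.g).app t) (d.app t) := fun t => hex1 _
  have hd2 : ∀ t, Function.Exact (d.app t) ((lcDiagramMap J (n + 1) S.f).app t) := fun t => hex2 _
  clear_value d
  let D : (localCohomology J n).obj S.X₃ ⟶ (localCohomology J (n + 1)).obj S.X₁ :=
    (lcIsColimit J n S.X₃).map (lcCocone J (n + 1) S.X₁) d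
  have hD : ∀ t, lcι J n S.X₃ t ≫ D = d.app t ≫ lcι J (n + 1) S.X₁ t := fun t =>
    (lcIsColimit J n S.X₃).fac _ t
  have hD' : ∀ t x, D (lcι J n S.X₃ t x) = lcι J (n + 1) S.X₁ t (d.app t x) := fun t x =>
    ConcreteCategory.congr_hom (hD t) x
  have hg : ∀ t x, (localCohomology J n).map S.g (lcι J n S.X₂ t x) =
    lcι J n S.X₃ t ((lcDiagramMap J n S.g).app t x) := fun t x =>
      ConcreteCategory.congr_hom (lcι_map J n S.g t) x
  have hf : ∀ t x, (localCohomology J (n + 1)).map S.f (lcι J (n + 1) S.X₁ t x) =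
    lcι J (n + 1) S.X₂ t ((lcDiagramMap J (n + 1) S.f).app t x) := fun t x =>
      ConcreteCategory.congr_hom (lcι_map J (n + 1) S.f t) x
  clear_value D
  refine ⟨D, fun x => ⟨fun hx => ?_, ?_⟩, fun x => ⟨fun hx => ?_, ?_⟩⟩
  · obtain ⟨t, y, rfl⟩ := lcι_surj J _ _ x
    rw [hD', lcι_eq_zero_iff] at hx
    obtain ⟨s, a, hx⟩ := hx
    rw [← NatTrans.naturality_apply, hd1 s] at hx
    obtain ⟨z, hz⟩ := hx
    refine ⟨lcι J n S.X₂ s z, ?_⟩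
    rw [hg, hz]
    exact ConcreteCategory.congr_hom (lcι_w J n S.X₃ a) y
  · rintro ⟨x, rfl⟩
    obtain ⟨t, y, rfl⟩ := lcι_surj J _ _ x
    rw [hg, hD', (hd1 t).apply_apply_eq_zero, map_zero]
  · obtain ⟨t, y, rfl⟩ := lcι_surj J _ _ x
    rw [hf, lcι_eq_zero_iff] at hx
    obtain ⟨s, a, hx⟩ := hx
    rw [← NatTrans.naturality_apply, hd2 s] at hx
    obtain ⟨z, hz⟩ := hx
    refine ⟨lcι J n S.X₃ s z, ?_⟩
    rw [hD', hz]
    exact ConcreteCategory.congr_hom (lcι_w J _ S.X₁ a) y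
  · rintro ⟨x, rfl⟩
    obtain ⟨t, y, rfl⟩ := lcι_surj J _ _ x
    rw [hD', hf, (hd2 t).apply_apply_eq_zero, map_zero]

end LocalCohomologySequence

/-! ### Local cohomology in degree zero -/

section LocalCohomologyZero

open Opposite
variable {R : Type u} [CommRing R] (J : Ideal R)

/-- `H^0_J(M)` is naturally the submodule of the elements of `M` killed by some power of `J`. The map
`θ` is induced by evaluating a homomorphism `R/J^t ⟶ M` at `1`. -/
lemma lc_zero_exists :
    ∃ θ : ∀ M : ModuleCat.{u} R, (localCohomology J 0).obj M →ₗ[R] M,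
      (∀ {M N} (f : M ⟶ N) x, θ N ((localCohomology J 0).map f x) = f (θ M x)) ∧
      (∀ M, Function.Injective (θ M)) ∧
      (∀ (M : ModuleCat.{u} R) (m : M), m ∈ LinearMap.range (θ M) ↔ ∃ t : ℕ, ∀ r ∈ J ^ t, r • m = 0) := by
  obtain ⟨e, he1, he2⟩ := Ext_zero_exists (R := R)
  let q : (ℕᵒᵖ)ᵒᵖ ⥤ (ModuleCat.{u} R)ᵒᵖ :=
    (localCohomology.ringModIdeals (localCohomology.idealPowersDiagram J)).op
  let one : ∀ t : (ℕᵒᵖ)ᵒᵖ, (q.obj t).unop := fun t => (1 : R ⧸ J ^ t.unop.unop)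
  have hone : ∀ {s t : (ℕᵒᵖ)ᵒᵖ} (a : s ⟶ t), (q.map a).unop (one t) = one s := fun a => rfl
  let E : ∀ t M, (lcDiagram J 0 M).obj t ≃ₗ[R] ((q.obj t).unop ⟶ M) := fun t M => e (q.obj t) M
  have hE : ∀ {s t} (a : s ⟶ t) (M) (x : (lcDiagram J 0 M).obj s),
      E t M ((lcDiagram J 0 M).map a x) = (q.map a).unop ≫ E s M x := fun a M x =>
    he1 (q.map a) M x
  have hE2 : ∀ {M N} (f : M ⟶ N) (t) (x : (lcDiagram J 0 M).obj t),
      E t N ((lcDiagramMap J 0 f).app t x) = E t M x ≫ f := fun f t x => he2 (q.obj t) f x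
  have hext : ∀ t M (x : (lcDiagram J 0 M).obj t), E t M x (one t) = 0 → x = 0 := by
    intro t M x hx
    rw [← (E t M).map_eq_zero_iff]
    ext r
    obtain ⟨r, rfl⟩ := Ideal.Quotient.mk_surjective (show R ⧸ J ^ t.unop.unop from r)
    have : (Ideal.Quotient.mk _ r : R ⧸ J ^ t.unop.unop) = r • (1 : R ⧸ J ^ t.unop.unop) := by
      rw [Algebra.smul_def, mul_one]; rfl
    rw [this]
    refine ((E t M x).hom.map_smul r (one t)).trans ?_
    exact (congrArg (r • ·) hx).trans (smul_zero r)
  have hsurj : ∀ t (M : ModuleCat.{u} R) (m : M), (∀ r ∈ J ^ t.unop.unop, r • m = 0) →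
      ∃ x : (lcDiagram J 0 M).obj t, E t M x (one t) = m := by
    intro t M m hm
    let f : (q.obj t).unop ⟶ M := ModuleCat.ofHom (Submodule.liftQ (J ^ t.unop.unop)
      (LinearMap.toSpanSingleton R M m) (fun r hr => hm r hr))
    refine ⟨(E t M).symm f, ?_⟩
    rw [LinearEquiv.apply_symm_apply]
    exact one_smul R m
  have hkill : ∀ t M (x : (lcDiagram J 0 M).obj t), ∀ r ∈ J ^ t.unop.unop,
      r • E t M x (one t) = 0 := by
    intro t M x r hr
    refine ((E t M x).hom.map_smul r (one t)).symm.trans ?_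
    have : r • one t = 0 := by
      change r • (1 : R ⧸ J ^ t.unop.unop) = 0
      rw [Algebra.smul_def, mul_one]
      exact Ideal.Quotient.eq_zero_iff_mem.2 hr
    rw [this, map_zero]
  let c : ∀ M t, (lcDiagram J 0 M).obj t ⟶ M := fun M t => ModuleCat.ofHom
    { toFun x := E t M x (one t)
      map_add' x y :=
        ConcreteCategory.congr_hom ((E t M).map_add x y) (one t)
      map_smul' r x :=
        ConcreteCategory.congr_hom ((E t M).map_smul r x) (one t) }
  have hc : ∀ M t x, c M t x = E t M x (one t) := fun M t x => rfl
  let θ : ∀ M, (localCohomology J 0).obj M ⟶ M := fun M =>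
    (lcIsColimit J 0 M).desc (Cocone.mk M
      { app t := c M t
        naturality s t a := by
          ext x
          change c M t ((lcDiagram J 0 M).map a x) = c M s x
          rw [hc, hc, hE]
          exact congrArg (E s M x) (hone a) })
  have hθ : ∀ M t x, θ M (lcι J 0 M t x) = E t M x (one t) := fun M t x =>
    ConcreteCategory.congr_hom ((lcIsColimit J 0 M).fac _ t) x
  clear_value θ
  refine ⟨fun M => (θ M).hom, ?_, ?_, ?_⟩
  · intro M N f x
    obtain ⟨t, x, rfl⟩ := lcι_surj J _ _ x
    change θ N _ = f (θ M _)
    have := ConcreteCategory.congr_hom (lcι_map J 0 f t) x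
    refine (congrArg (θ N) this).trans ?_
    refine (hθ N t _).trans ((ConcreteCategory.congr_hom (hE2 f t x) (one t)).trans ?_)
    exact congrArg f (hθ M t x).symm
  · intro M
    rw [injective_iff_map_eq_zero]
    intro x hx
    obtain ⟨t, x, rfl⟩ := lcι_surj J _ _ x
    rw [hext t M x ((hθ M t x).symm.trans hx), map_zero]
  · intro M m
    constructor
    · rintro ⟨x, rfl⟩
      obtain ⟨t, x, rfl⟩ := lcι_surj J _ _ x
      refine ⟨t.unop.unop, fun r hr => ?_⟩
      exact (congrArg (r • ·) (hθ M t x)).trans (hkill t M x r hr)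
    · rintro ⟨t, ht⟩
      obtain ⟨x, hx⟩ := hsurj (op (op t)) M m ht
      exact ⟨lcι J 0 M _ x, (hθ M _ x).trans hx⟩

end LocalCohomologyZero

/-! ### The `A⟦X⟧`-module of `X`-torsion coinduced maps -/

section Tors

open PowerSeries
variable (A : Type u) [CommRing A] (M : Type u) [AddCommGroup M] [Module A M]

/-- The coinduced module `Hom_A(A⟦X⟧, M)`, on which `A⟦X⟧` acts by `(s • g) t = g (s * t)`. -/
def Coind : Type u := A⟦X⟧ →ₗ[A] M

instance : AddCommGroup (Coind A M) := inferInstanceAs (AddCommGroup (A⟦X⟧ →ₗ[A] M))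

instance : FunLike (Coind A M) A⟦X⟧ M := inferInstanceAs (FunLike (A⟦X⟧ →ₗ[A] M) A⟦X⟧ M)

instance : LinearMapClass (Coind A M) A A⟦X⟧ M :=
  inferInstanceAs (LinearMapClass (A⟦X⟧ →ₗ[A] M) A A⟦X⟧ M)

variable {A M} in
@[ext] lemma Coind.ext {g h : Coind A M} (H : ∀ t, g t = h t) : g = h := LinearMap.ext H

variable {A M} in
@[simp] lemma Coind.add_apply (g h : Coind A M) (t) : (g + h) t = g t + h t := rfl

variable {A M} in
@[simp] lemma Coind.zero_apply (t) : (0 : Coind A M) t = 0 := rfl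

instance : Module A⟦X⟧ (Coind A M) where
  smul s g := (show A⟦X⟧ →ₗ[A] M from g) ∘ₗ LinearMap.mulLeft A s
  one_smul g := Coind.ext fun t => congrArg g (one_mul t)
  mul_smul r s g := Coind.ext fun t => congrArg g (by
    change r * s * t = s * (r * t)
    ring)
  smul_zero s := rfl
  smul_add s g h := rfl
  add_smul r s g := Coind.ext fun t => (congrArg g (add_mul r s t)).trans (map_add g _ _)
  zero_smul g := Coind.ext fun t => (congrArg g (zero_mul t)).trans (map_zero g)

variable {A M} in
@[simp] lemma Coind.smul_apply (s : A⟦X⟧) (g : Coind A M) (t) : (s • g) t = g (s * t) := rfl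

/-- The submodule of `Hom_A(A⟦X⟧, M)` of the maps that vanish on `X ^ N * A⟦X⟧` for some `N`. It is
a concrete model of `M ⊗ A⟦X⟧_X / A⟦X⟧`, the value at `X ^ k` being the coefficient of
`X ^ (-1 - k)`. -/
def tors : Submodule A⟦X⟧ (Coind A M) where
  carrier := {g | ∃ N : ℕ, ∀ t, g (X ^ N * t) = 0}
  zero_mem' := ⟨0, fun _ => rfl⟩
  add_mem' := by
    rintro g h ⟨N, hN⟩ ⟨L, hL⟩
    refine ⟨N + L, fun t => ?_⟩
    rw [Coind.add_apply, pow_add, mul_assoc, hN, mul_left_comm, hL, add_zero]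
  smul_mem' := by
    rintro s g ⟨N, hN⟩
    refine ⟨N, fun t => ?_⟩
    rw [Coind.smul_apply, mul_left_comm, hN]

variable {A M}

lemma mem_tors {g : Coind A M} : g ∈ tors A M ↔ ∃ N : ℕ, ∀ t, g (X ^ N * t) = 0 := Iff.rfl

variable {M' M'' : Type u} [AddCommGroup M'] [Module A M'] [AddCommGroup M''] [Module A M'']

/-- Functoriality of `tors` in the coefficient module: composition with `φ`. -/
def torsMap (φ : M →ₗ[A] M') : tors A M →ₗ[A⟦X⟧] tors A M' where
  toFun g := ⟨φ ∘ₗ (show A⟦X⟧ →ₗ[A] M from g.1), by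
    obtain ⟨N, hN⟩ := g.2
    exact ⟨N, fun t => (congrArg φ (hN t)).trans (map_zero φ)⟩⟩
  map_add' g h := Subtype.ext (Coind.ext fun t => map_add φ _ _)
  map_smul' s g := rfl

@[simp] lemma torsMap_apply (φ : M →ₗ[A] M') (g : tors A M) (t) :
    (torsMap φ g).1 t = φ (g.1 t) := rfl

/-- The map `t ↦ coeff k t • m`, whose only nonzero value on powers of `X` is `m`, at `X ^ k`. -/
def torsSingle (k : ℕ) : M →+ tors A M where
  toFun m := ⟨(LinearMap.toSpanSingleton A M m) ∘ₗ (coeff k), k + 1, fun t => by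
    change coeff k (X ^ (k + 1) * t) • m = 0
    rw [coeff_X_pow_mul', if_neg (by omega), zero_smul]⟩
  map_zero' := Subtype.ext (Coind.ext fun t => smul_zero _)
  map_add' m n := Subtype.ext (Coind.ext fun t => smul_add _ _ _)

lemma torsSingle_apply (k : ℕ) (m : M) (t) :
    (torsSingle k m : tors A M).1 t = coeff k t • m := rfl

/-- Evaluation at `X ^ k`. -/
def torsEv (k : ℕ) : tors A M →+ M where
  toFun g := g.1 (X ^ k)
  map_zero' := rfl
  map_add' _ _ := rfl

lemma torsEv_apply (k : ℕ) (g : tors A M) : torsEv k g = g.1 (X ^ k) := rfl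

/-- Modulo `X ^ N`, a power series is a combination of the powers `X ^ k` with `k < N`. -/
lemma tors_apply_eq {g : Coind A M} {N : ℕ} (hN : ∀ t, g (X ^ N * t) = 0) (t : A⟦X⟧) :
    g t = ∑ k ∈ Finset.range N, coeff k t • g (X ^ k) := by
  have h : X ^ N ∣ t - ∑ k ∈ Finset.range N, coeff k t • (X : A⟦X⟧) ^ k := by
    rw [X_pow_dvd_iff]
    intro m hm
    simp [coeff_X_pow, hm]
  obtain ⟨s, hs⟩ := h
  have ht : g t = g (X ^ N * s + ∑ k ∈ Finset.range N, coeff k t • (X : A⟦X⟧) ^ k) :=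
    congrArg g (sub_eq_iff_eq_add.1 hs)
  rw [ht, map_add, hN, zero_add, map_sum]
  exact Finset.sum_congr rfl fun k _ => map_smul g _ _

lemma tors_ext {g h : tors A M} (H : ∀ k, torsEv k g = torsEv k h) : g = h := by
  obtain ⟨N, hN⟩ := (g - h).2
  rw [← sub_eq_zero]
  refine Subtype.ext (Coind.ext fun t => ?_)
  rw [tors_apply_eq hN]
  refine Finset.sum_eq_zero fun k _ => ?_
  have : torsEv k (g - h) = 0 := by rw [map_sub, H, sub_self]
  rw [← torsEv_apply, this, smul_zero]

/-- The map `t ↦ ∑ k, coeff k t • x k` attached to a finitely supported sequence `x` in `M`. -/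
def torsOfFinsupp : (ℕ →₀ M) →+ tors A M := Finsupp.liftAddHom torsSingle

lemma torsEv_torsOfFinsupp (k : ℕ) (x : ℕ →₀ M) :
    torsEv k (torsOfFinsupp x : tors A M) = x k := by
  induction x using Finsupp.induction_linear with
  | zero => simp
  | add x y hx hy => simp [hx, hy]
  | single j m =>
    rw [torsOfFinsupp, Finsupp.liftAddHom_apply_single, torsEv_apply, torsSingle_apply,
      coeff_X_pow, Finsupp.single_apply]
    split_ifs <;> simp

lemma torsOfFinsupp_bijective : Function.Bijective (torsOfFinsupp : (ℕ →₀ M) →+ tors A M) := by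
  constructor
  · intro x y h
    ext k
    rw [← torsEv_torsOfFinsupp (A := A), h, torsEv_torsOfFinsupp]
  · intro g
    obtain ⟨N, hN⟩ := g.2
    refine ⟨Finsupp.onFinset (Finset.range N) (fun k => torsEv k g) fun k hk => ?_, ?_⟩
    · by_contra h
      refine hk ?_
      rw [Finset.mem_range, not_lt] at h
      obtain ⟨j, rfl⟩ := Nat.exists_eq_add_of_le h
      rw [torsEv_apply, pow_add, hN]
    · refine tors_ext fun k => ?_
      rw [torsEv_torsOfFinsupp, Finsupp.onFinset_apply]

variable (A M) in
/-- A map in `tors A M` is determined by its finitely many nonzero values at the `X ^ k`. -/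
def torsEquiv : tors A M ≃+ (ℕ →₀ M) :=
  (AddEquiv.ofBijective _ torsOfFinsupp_bijective).symm

lemma torsEquiv_apply (g : tors A M) (k : ℕ) : torsEquiv A M g k = g.1 (X ^ k) := by
  obtain ⟨x, rfl⟩ := (torsEquiv A M).symm.surjective g
  rw [AddEquiv.apply_symm_apply]
  exact (torsEv_torsOfFinsupp k x).symm

lemma torsEquiv_torsMap (φ : M →ₗ[A] M') (g : tors A M) :
    torsEquiv A M' (torsMap φ g) = Finsupp.mapRange φ (map_zero φ) (torsEquiv A M g) := by
  ext k
  rw [torsEquiv_apply, Finsupp.mapRange_apply, torsEquiv_apply, torsMap_apply]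

lemma torsMap_injective {φ : M →ₗ[A] M'} (h : Function.Injective φ) :
    Function.Injective (torsMap φ) := by
  intro g g' hg
  refine tors_ext fun k => h ?_
  exact congrArg (torsEv k) hg

lemma torsMap_surjective {φ : M →ₗ[A] M'} (h : Function.Surjective φ) :
    Function.Surjective (torsMap φ) := by
  intro g
  obtain ⟨x, hx⟩ := Finsupp.mapRange_surjective φ (map_zero φ) h (torsEquiv A M' g)
  refine ⟨(torsEquiv A M).symm x, (torsEquiv A M').injective ?_⟩
  rw [torsEquiv_torsMap, AddEquiv.apply_symm_apply, hx]

open Classical in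
lemma mapRange_exact {P Q T : Type*} [AddCommGroup P] [AddCommGroup Q] [AddCommGroup T]
    (φ : P →+ Q) (ψ : Q →+ T) (h : Function.Exact φ ψ) :
    Function.Exact (Finsupp.mapRange.addMonoidHom (ι := ℕ) φ)
      (Finsupp.mapRange.addMonoidHom (ι := ℕ) ψ) := by
  intro x
  constructor
  · intro hx
    have hx' : ∀ k, ψ (x k) = 0 := fun k => DFunLike.congr_fun hx k
    choose y hy using fun k => (h (x k)).1 (hx' k)
    refine ⟨Finsupp.onFinset x.support (fun k => if x k = 0 then 0 else y k) ?_, ?_⟩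
    · intro k hk
      rw [Finsupp.mem_support_iff]
      intro h0
      simp [h0] at hk
    · ext k
      by_cases h0 : x k = 0
      · simp [h0]
      · simp [h0, hy]
  · rintro ⟨y, rfl⟩
    ext k
    exact h.apply_apply_eq_zero (y k)

lemma torsMap_exact {φ : M →ₗ[A] M'} {ψ : M' →ₗ[A] M''} (h : Function.Exact φ ψ) :
    Function.Exact (torsMap φ) (torsMap ψ) := by
  have hE := mapRange_exact φ.toAddMonoidHom ψ.toAddMonoidHom h
  intro g
  rw [← (torsEquiv A M'').map_eq_zero_iff, torsEquiv_torsMap]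
  refine (hE (torsEquiv A M' g)).trans ⟨?_, ?_⟩
  · rintro ⟨x, hx⟩
    refine ⟨(torsEquiv A M).symm x, (torsEquiv A M').injective ?_⟩
    rw [torsEquiv_torsMap, AddEquiv.apply_symm_apply]
    exact hx
  · rintro ⟨x, rfl⟩
    exact ⟨torsEquiv A M x, (torsEquiv_torsMap φ x).symm⟩

end Tors

/-! ### Injectivity and torsion sections of `tors A M` -/

section TorsInjective

open PowerSeries
variable {A : Type u} [CommRing A]

/-- The Artin–Rees lemma for the powers of `X` and an ideal `L` of `A⟦X⟧`. -/
lemma artinRees [IsNoetherianRing A] (L : Ideal A⟦X⟧) (m : ℕ) :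
    ∃ N : ℕ, ∀ s, X ^ N * s ∈ L → ∃ l ∈ L, X ^ N * s = X ^ m * l := by
  obtain ⟨k, hk⟩ := Ideal.exists_pow_inf_eq_pow_smul (Ideal.span {(X : A⟦X⟧)}) (M := A⟦X⟧) L
  refine ⟨m + k, fun s hs => ?_⟩
  have h1 : X ^ (m + k) * s ∈ Ideal.span {(X : A⟦X⟧)} ^ (m + k) • (⊤ : Ideal A⟦X⟧) ⊓ L := by
    refine ⟨?_, hs⟩
    rw [smul_eq_mul, Ideal.mul_top, Ideal.span_singleton_pow]
    exact Ideal.mul_mem_right _ _ (Ideal.mem_span_singleton_self _)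
  rw [hk _ (Nat.le_add_left _ _), Nat.add_sub_cancel, Ideal.span_singleton_pow,
    smul_eq_mul, Ideal.mem_span_singleton_mul] at h1
  obtain ⟨l, hl, h⟩ := h1
  exact ⟨l, hl.2, h.symm⟩

/-- `tors A` preserves injective modules over a Noetherian ring. By Baer's criterion a map `f` from
an ideal `L` to `tors A I` has to be extended. It corresponds to the `A`-linear map
`φ = (l ↦ f l 1)` from `L` to `I`. By the Artin–Rees lemma `φ` vanishes on `L ∩ X ^ N A⟦X⟧` for some
`N`, so it extends to a map on `A⟦X⟧` that kills `X ^ N A⟦X⟧`, that is, to an element of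
`tors A I`. -/
lemma tors_injective [IsNoetherianRing A] (I : Type u) [AddCommGroup I] [Module A I]
    [Module.Injective A I] : Module.Injective A⟦X⟧ (tors A I) := by
  refine Module.Baer.injective ?_
  intro L f
  -- a power of `X` kills the image of `f`, because `L` is finitely generated
  have hfin : ∃ m : ℕ, ∀ l, (X : A⟦X⟧) ^ m • f l = 0 := by
    obtain ⟨s, hs⟩ : (⊤ : Submodule A⟦X⟧ L).FG := IsNoetherian.noetherian ⊤
    have hx : ∀ x, ∃ n : ℕ, (X : A⟦X⟧) ^ n • f x = 0 := by
      intro x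
      obtain ⟨n, hn⟩ := (f x).2
      exact ⟨n, Subtype.ext (Coind.ext fun t => hn t)⟩
    choose n hn using hx
    refine ⟨s.sup n, fun l => ?_⟩
    have hle : (⊤ : Submodule A⟦X⟧ L) ≤ LinearMap.ker ((X : A⟦X⟧) ^ (s.sup n) • f) := by
      rw [← hs, Submodule.span_le]
      intro x hx
      obtain ⟨j, hj⟩ := Nat.exists_eq_add_of_le' (Finset.le_sup (f := n) hx)
      rw [SetLike.mem_coe, LinearMap.mem_ker, LinearMap.smul_apply, hj, pow_add, mul_smul, hn,
        smul_zero]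
    exact hle (Submodule.mem_top (x := l))
  obtain ⟨m, hm⟩ := hfin
  obtain ⟨N, hN⟩ := artinRees L m
  let φ : L →ₗ[A] I :=
    { toFun l := (f l).1 1
      map_add' l l' := by rw [map_add]; rfl
      map_smul' a l := by
        have h1 : a • l = (algebraMap A A⟦X⟧ a) • l := Subtype.ext (algebra_compatible_smul _ a _)
        rw [h1, map_smul]
        have h2 : algebraMap A A⟦X⟧ a * 1 = a • 1 := (Algebra.smul_def _ _).symm
        exact (congrArg (f l).1 h2).trans (map_smul (f l).1 a 1) }
  have hφ : ∀ l, φ l = (f l).1 1 := fun _ => rfl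
  -- the quotient of `A⟦X⟧` through which the extension of `φ` is required to factor
  let Q := A⟦X⟧ ⧸ Ideal.span {(X : A⟦X⟧) ^ N}
  let π : A⟦X⟧ →ₗ[A] Q := (Ideal.Quotient.mkₐ A _).toLinearMap
  have hπ : ∀ s, π s = 0 ↔ (X : A⟦X⟧) ^ N ∣ s := fun s =>
    Ideal.Quotient.eq_zero_iff_mem.trans Ideal.mem_span_singleton
  let h : L →ₗ[A] Q := π ∘ₗ (L.subtype.restrictScalars A)
  have hker : LinearMap.ker h ≤ LinearMap.ker φ := by
    intro l hl
    obtain ⟨s, hs⟩ := (hπ l.1).1 hl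
    have hl' := l.2
    rw [hs] at hl'
    obtain ⟨l', hl'', e⟩ := hN s hl'
    have : l = (X : A⟦X⟧) ^ m • (⟨l', hl''⟩ : L) := Subtype.ext (hs.trans e)
    rw [LinearMap.mem_ker, hφ, this, map_smul, hm]
    rfl
  obtain ⟨ψ, hψ⟩ := Module.Injective.out ((LinearMap.ker h).liftQ h le_rfl)
    (LinearMap.ker_eq_bot.1 (Submodule.ker_liftQ_eq_bot' _ h rfl))
    ((LinearMap.ker h).liftQ φ hker)
  let g : tors A I := ⟨(ψ ∘ₗ π : A⟦X⟧ →ₗ[A] I), N, fun t => by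
    change ψ (π _) = 0
    rw [(hπ _).2 (dvd_mul_right _ _), map_zero]⟩
  refine ⟨LinearMap.toSpanSingleton _ _ g, fun l hl => ?_⟩
  refine Subtype.ext (Coind.ext fun s => ?_)
  let ls : L := s • ⟨l, hl⟩
  have h1 : ψ (h ls) = φ ls := hψ (Submodule.Quotient.mk ls)
  have h2 : (f ls).1 1 = (f ⟨l, hl⟩).1 s := by
    rw [map_smul]
    exact congrArg (f ⟨l, hl⟩).1 (mul_one s)
  rw [← h2, ← hφ, ← h1]
  change ψ (π (l * s)) = ψ (π (s * l))
  rw [mul_comm]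

variable {M : Type u} [AddCommGroup M] [Module A M]

/-- An element of `tors A M` is killed by a power of `𝔞 A⟦X⟧ + (X)` if and only if each of its
values at the `X ^ k` is killed by a power of `𝔞`. -/
lemma tors_sections (𝔞 : Ideal A) (g : tors A M) :
    (∃ t : ℕ, ∀ r ∈ (𝔞.map (algebraMap A A⟦X⟧) ⊔ Ideal.span {(X : A⟦X⟧)}) ^ t, r • g = 0) ↔
      ∀ k, ∃ t : ℕ, ∀ a ∈ 𝔞 ^ t, a • torsEquiv A M g k = 0 := by
  have key : ∀ (a : A) (k), ((algebraMap A A⟦X⟧ a) • g).1 (X ^ k) = a • torsEquiv A M g k := by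
    intro a k
    rw [torsEquiv_apply]
    exact (congrArg g.1 (Algebra.smul_def _ _).symm).trans (map_smul g.1 a _)
  constructor
  · rintro ⟨t, ht⟩ k
    refine ⟨t, fun a ha => ?_⟩
    have := ht (algebraMap A A⟦X⟧ a) (Ideal.pow_right_mono le_sup_left t (by
      rw [← Ideal.map_pow]; exact Ideal.mem_map_of_mem _ ha))
    rw [← key, this]
    rfl
  · intro H
    choose n hn using H
    obtain ⟨N, hN⟩ := g.2
    let t := (Finset.range N).sup n
    refine ⟨t + N, ?_⟩
    suffices h : (𝔞.map (algebraMap A A⟦X⟧) ⊔ Ideal.span {(X : A⟦X⟧)}) ^ (t + N) ≤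
        LinearMap.ker (LinearMap.toSpanSingleton A⟦X⟧ (tors A M) g) from fun r hr => h hr
    refine Ideal.sup_pow_add_le_pow_sup_pow.trans (sup_le ?_ ?_)
    · rw [← Ideal.map_pow, Ideal.map_le_iff_le_comap]
      intro a ha
      change (algebraMap A A⟦X⟧ a) • g = 0
      refine (torsEquiv A M).injective ?_
      ext k
      rw [torsEquiv_apply, key, map_zero, Finsupp.zero_apply]
      by_cases hk : k < N
      · exact hn k a (Ideal.pow_le_pow_right (Finset.le_sup (Finset.mem_range.2 hk)) ha)
      · obtain ⟨j, rfl⟩ := Nat.exists_eq_add_of_le (not_lt.1 hk)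
        rw [torsEquiv_apply, pow_add, hN, smul_zero]
    · rw [Ideal.span_singleton_pow, Ideal.span_singleton_le_iff_mem]
      exact Subtype.ext (Coind.ext fun t => hN t)

end TorsInjective

/-! ### Laurent series -/

section Laurent

open PowerSeries
open scoped LaurentSeries
variable (A : Type u) [CommRing A]

variable {A} in
lemma laurent_smul (s : A⟦X⟧) (h : A⸨X⸩) : s • h = (s : A⸨X⸩) * h := rfl

variable {A} in
lemma laurent_coeff_X_pow_smul (k : ℕ) (h : A⸨X⸩) (n : ℤ) :
    ((X ^ k : A⟦X⟧) • h).coeff n = h.coeff (n - k) := by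
  have h1 := HahnSeries.coeff_single_mul_add (r := (1 : A)) (x := h) (a := n - k) (b := k)
  rw [sub_add_cancel, one_mul] at h1
  rw [← h1, laurent_smul, HahnSeries.ofPowerSeries_X_pow]

/-- The residue pairing: a Laurent series `h` is sent to the map taking a power series `f` to the
coefficient of `X ^ (-1)` in `f * h`. -/
def resMap : A⸨X⸩ →ₗ[A⟦X⟧] tors A A where
  toFun h := ⟨({ toFun := fun f => ((f : A⟦X⟧) • h).coeff (-1)
                 map_add' := fun f f' => by rw [add_smul]; rfl
                 map_smul' := fun a f => by
                  rw [PowerSeries.smul_eq_C_mul, mul_smul, laurent_smul, PowerSeries.coe_C,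
                    HahnSeries.C_mul_eq_smul]
                  rfl } : A⟦X⟧ →ₗ[A] A), by
    obtain ⟨⟨p, ⟨_, N, rfl⟩⟩, hp⟩ := IsLocalization.surj (Submonoid.powers (X : A⟦X⟧)) h
    refine ⟨N, fun t => ?_⟩
    change ((X ^ N * t) • h).coeff (-1) = 0
    have h1 : (X ^ N * t) • h = ((t * p : A⟦X⟧) : A⸨X⸩) := by
      rw [mul_comm, mul_smul, PowerSeries.coe_mul]
      exact congrArg (t • ·) ((mul_comm _ _).trans hp)
    rw [h1, PowerSeries.coeff_coe, if_pos (by norm_num)]⟩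
  map_add' h h' := Subtype.ext (Coind.ext fun t => congrArg (HahnSeries.coeff · (-1))
    (smul_add t h h'))
  map_smul' s h := Subtype.ext (Coind.ext fun t => congrArg (HahnSeries.coeff · (-1)) (by
    change t • s • h = (s * t) • h
    rw [mul_comm, mul_smul]))

variable {A}
lemma resMap_X_pow (h : A⸨X⸩) (k : ℕ) : (resMap A h).1 (X ^ k) = h.coeff (-1 - k) :=
  laurent_coeff_X_pow_smul k h (-1)

lemma resMap_surjective : Function.Surjective (resMap A) := by
  intro g
  let x := torsEquiv A A g
  have hx : BddBelow (Function.support fun n : ℤ => if n < 0 then x (-1 - n).toNat else 0) := by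
    obtain ⟨N, hN⟩ := g.2
    refine ⟨-N, fun n hn => ?_⟩
    by_contra hlt
    refine hn ?_
    have : (-1 - n).toNat = N + ((-1 - n).toNat - N) := by omega
    dsimp only
    rw [torsEquiv_apply, this, pow_add, hN, ite_self]
  refine ⟨HahnSeries.ofSuppBddBelow _ hx, tors_ext fun k => ?_⟩
  rw [torsEv_apply, resMap_X_pow, torsEv_apply, ← torsEquiv_apply]
  have : (-1 - (-1 - (k : ℤ))).toNat = k := by omega
  change (if (-1 - (k : ℤ)) < 0 then x (-1 - (-1 - (k : ℤ))).toNat else 0) = x k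
  rw [if_pos (by omega), this]

/-- A Laurent series is a power series if and only if its residue pairing is zero. -/
lemma resMap_exact : Function.Exact (Algebra.linearMap A⟦X⟧ A⸨X⸩) (resMap A) := by
  intro h
  constructor
  · intro hh
    refine ⟨PowerSeries.mk fun n => h.coeff n, ?_⟩
    ext n
    refine (PowerSeries.coeff_coe _ n).trans ?_
    split_ifs with hn
    · obtain ⟨k, rfl⟩ : ∃ k : ℕ, n = -1 - k := ⟨(-1 - n).toNat, by omega⟩
      rw [← resMap_X_pow, hh]
      rfl
    · rw [PowerSeries.coeff_mk, Int.natAbs_of_nonneg (not_lt.1 hn)]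
  · rintro ⟨p, rfl⟩
    refine tors_ext fun k => ?_
    rw [torsEv_apply, resMap_X_pow, map_zero]
    exact (PowerSeries.coeff_coe p _).trans (if_pos (by omega))

lemma algebraMap_laurent_injective : Function.Injective (Algebra.linearMap A⟦X⟧ A⸨X⸩) :=
  HahnSeries.ofPowerSeries_injective

lemma X_smul_bijective : Function.Bijective fun h : A⸨X⸩ => (X : A⟦X⟧) • h := by
  have hu : IsUnit (algebraMap A⟦X⟧ A⸨X⸩ X) :=
    IsLocalization.map_units A⸨X⸩ (⟨X, Submonoid.mem_powers X⟩ : Submonoid.powers (X : A⟦X⟧))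
  exact IsUnit.isUnit_iff_mulLeft_bijective.1 hu

end Laurent

/-! ### Comparison of local cohomology over `A` and over `A⟦X⟧` -/

section Comparison

open PowerSeries
open scoped LaurentSeries

/-- Two injections into `Z` with the same range have isomorphic sources, compatibly. -/
lemma exists_equiv_of_range_eq {P Q Z : Type*} [AddCommGroup P] [AddCommGroup Q]
    [AddCommGroup Z] (f : P →+ Z) (g : Q →+ Z) (hf : Function.Injective f)
    (hg : Function.Injective g) (h : ∀ z, z ∈ f.range ↔ z ∈ g.range) :
    ∃ e : P ≃+ Q, ∀ x, g (e x) = f x := by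
  have hr : f.range = g.range := AddSubgroup.ext h
  let e := (AddMonoidHom.ofInjective hf).trans
    ((AddEquiv.addSubgroupCongr hr).trans (AddMonoidHom.ofInjective hg).symm)
  refine ⟨e, fun x => ?_⟩
  have : AddMonoidHom.ofInjective hg (e x) =
      AddEquiv.addSubgroupCongr hr (AddMonoidHom.ofInjective hf x) :=
    AddEquiv.apply_symm_apply _ _
  exact congrArg Subtype.val this

/-- An isomorphism that matches the kernels of two surjections descends to their targets. -/
lemma exists_equiv_of_ker {P Q P' Q' : Type*} [AddCommGroup P] [AddCommGroup Q]
    [AddCommGroup P'] [AddCommGroup Q'] (e : P ≃+ Q) (f : P →+ P') (g : Q →+ Q')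
    (hf : Function.Surjective f) (hg : Function.Surjective g)
    (h : ∀ x, f x = 0 ↔ g (e x) = 0) : Nonempty (P' ≃+ Q') := by
  have hs : Function.Surjective (g.comp (e : P →+ Q)) := hg.comp e.surjective
  have hk : f.ker = (g.comp (e : P →+ Q)).ker := AddSubgroup.ext h
  exact ⟨((QuotientAddGroup.quotientKerEquivOfSurjective f hf).symm.trans
    (QuotientAddGroup.quotientAddEquivOfEq hk)).trans
      (QuotientAddGroup.quotientKerEquivOfSurjective _ hs)⟩

variable {A : Type u} [CommRing A]

/-- The ideal `𝔞 A⟦X⟧ + (X)` of `A⟦X⟧`. -/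
abbrev extIdeal (𝔞 : Ideal A) : Ideal A⟦X⟧ :=
  𝔞.map (algebraMap A A⟦X⟧) ⊔ Ideal.span {(X : A⟦X⟧)}

/-- `tors A M` as an object of the category of `A⟦X⟧`-modules. -/
abbrev torsObj (M : ModuleCat.{u} A) : ModuleCat.{u} A⟦X⟧ := ModuleCat.of A⟦X⟧ (tors A M)

/-- `torsMap` as a morphism in the category of `A⟦X⟧`-modules. -/
abbrev torsHom {M N : ModuleCat.{u} A} (f : M ⟶ N) : torsObj M ⟶ torsObj N :=
  ModuleCat.ofHom (torsMap f.hom)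

/-- The map `H^i_𝔞(M) ⟶ H^i_𝔞(N)` induced by `f`, applied termwise to finitely supported
sequences. -/
abbrev seqMap (𝔞 : Ideal A) (i : ℕ) {M N : ModuleCat.{u} A} (f : M ⟶ N) :
    (ℕ →₀ (localCohomology 𝔞 i).obj M) →+ (ℕ →₀ (localCohomology 𝔞 i).obj N) :=
  Finsupp.mapRange.addMonoidHom ((localCohomology 𝔞 i).map f).hom.toAddMonoidHom

/-- The degree zero comparison: both sides embed, naturally, into the finitely supported sequences in
`M`, with the same image by `tors_sections`. -/
lemma tors_zero (𝔞 : Ideal A) :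
    ∃ e : ∀ M : ModuleCat.{u} A, (localCohomology (extIdeal 𝔞) 0).obj (torsObj M) ≃+
        (ℕ →₀ (localCohomology 𝔞 0).obj M),
      ∀ {M N} (f : M ⟶ N) x, e N ((localCohomology (extIdeal 𝔞) 0).map (torsHom f) x) =
        seqMap 𝔞 0 f (e M x) := by
  obtain ⟨θ, hθ, hinj, hrange⟩ := lc_zero_exists 𝔞
  obtain ⟨θ', hθ', hinj', hrange'⟩ := lc_zero_exists (extIdeal 𝔞)
  let p : ∀ M : ModuleCat.{u} A, (localCohomology (extIdeal 𝔞) 0).obj (torsObj M) →+ (ℕ →₀ M) :=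
    fun M => (torsEquiv A M : tors A M →+ _).comp (θ' (torsObj M)).toAddMonoidHom
  let q : ∀ M : ModuleCat.{u} A, (ℕ →₀ (localCohomology 𝔞 0).obj M) →+ (ℕ →₀ M) :=
    fun M => Finsupp.mapRange.addMonoidHom (θ M).toAddMonoidHom
  have hp : ∀ M, Function.Injective (p M) := fun M =>
    (torsEquiv A M).injective.comp (hinj' _)
  have hq : ∀ M, Function.Injective (q M) := fun M =>
    Finsupp.mapRange_injective (θ M) (map_zero (θ M)) (hinj M)
  have hpq : ∀ M z, z ∈ (p M).range ↔ z ∈ (q M).range := by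
    intro M z
    have h1 : z ∈ (p M).range ↔
        (torsEquiv A M).symm z ∈ LinearMap.range (θ' (torsObj M)) := by
      constructor
      · rintro ⟨x, rfl⟩
        exact ⟨x, ((torsEquiv A M).symm_apply_apply _).symm⟩
      · rintro ⟨x, hx⟩
        exact ⟨x, ((torsEquiv A M).eq_symm_apply.1 hx)⟩
    have h2 : z ∈ (q M).range ↔ ∀ k, z k ∈ LinearMap.range (θ M) := by
      constructor
      · rintro ⟨x, rfl⟩ k
        exact ⟨x k, rfl⟩
      · intro h
        choose y hy using h
        refine ⟨Finsupp.onFinset z.support y fun k hk => ?_, ?_⟩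
        · rw [Finsupp.mem_support_iff, ← hy]
          exact fun h0 => hk (hinj M (h0.trans (map_zero _).symm))
        · ext k
          exact hy k
    rw [h1, h2, hrange']
    refine (tors_sections 𝔞 _).trans (forall_congr' fun k => ?_)
    rw [AddEquiv.apply_symm_apply, hrange]
  choose e he using fun M => exists_equiv_of_range_eq (p M) (q M) (hp M) (hq M) (hpq M)
  refine ⟨e, fun {M N} f x => hq N ?_⟩
  rw [he]
  have h1 : p N ((localCohomology (extIdeal 𝔞) 0).map (torsHom f) x) =
      Finsupp.mapRange f (map_zero f.hom) (p M x) := by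
    refine (congrArg (torsEquiv A N) (hθ' (torsHom f) x)).trans ?_
    exact torsEquiv_torsMap f.hom _
  rw [h1, ← he]
  ext k
  exact (hθ f (e M x k)).symm

lemma torsObj_injective [IsNoetherianRing A] (I : ModuleCat.{u} A) [Injective I] :
    Injective (torsObj I) := by
  have : Module.Injective A I := (Module.injective_iff_injective_object A I).2 ‹_›
  have := tors_injective (A := A) I
  exact (Module.injective_iff_injective_object A⟦X⟧ (tors A I)).1 this

/-- `H^i_{𝔞 A⟦X⟧ + (X)}(tors A M)` is a direct sum of countably many copies of `H^i_𝔞(M)`. This is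
dimension shifting along an embedding of `M` into an injective module, whose image under `tors A` is
again an embedding into an injective module. Naturality is needed only to pass from degree `0` to
degree `1`; above, the local cohomology of the injective modules vanishes in the relevant
degrees. -/
theorem lc_tors [IsNoetherianRing A] (𝔞 : Ideal A) (i : ℕ) : ∀ M : ModuleCat.{u} A,
    Nonempty ((localCohomology (extIdeal 𝔞) i).obj (torsObj M) ≃+
      (ℕ →₀ (localCohomology 𝔞 i).obj M)) := by
  induction i with
  | zero =>
    obtain ⟨e, -⟩ := tors_zero 𝔞
    exact fun M => ⟨e M⟩
  | succ n ih =>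
    intro M
    let ι := Injective.ι M
    let S := ShortComplex.mk ι (cokernel.π ι) (cokernel.condition ι)
    have hS : S.ShortExact :=
      { exact := ShortComplex.exact_cokernel ι
        mono_f := by dsimp [S]; infer_instance
        epi_g := by dsimp [S]; infer_instance }
    have hI : Injective S.X₂ := by dsimp [S]; infer_instance
    have hX : S.X₁ = M := rfl
    clear_value S
    subst hX
    have hf := (ModuleCat.mono_iff_injective _).1 hS.mono_f
    have hg := (ModuleCat.epi_iff_surjective _).1 hS.epi_g
    have hfg := (ShortComplex.ShortExact.moduleCat_exact_iff_function_exact _).1 hS.exact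
    let T : ShortComplex (ModuleCat.{u} A⟦X⟧) := ShortComplex.mk (torsHom S.f) (torsHom S.g)
      (ModuleCat.hom_ext (LinearMap.ext fun g => (torsMap_exact hfg).apply_apply_eq_zero g))
    have hT : T.ShortExact :=
      { exact := (ShortComplex.ShortExact.moduleCat_exact_iff_function_exact _).2
          (torsMap_exact hfg)
        mono_f := (ModuleCat.mono_iff_injective _).2 (torsMap_injective hf)
        epi_g := (ModuleCat.epi_iff_surjective _).2 (torsMap_surjective hg) }
    have hTI : Injective T.X₂ := torsObj_injective S.X₂
    obtain ⟨δ, hδ1, hδ2⟩ := lc_exists_delta 𝔞 S hS n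
    obtain ⟨δ', hδ1', hδ2'⟩ := lc_exists_delta (extIdeal 𝔞) T hT n
    have hs : Function.Surjective δ := fun x =>
      (hδ2 x).1 (@Subsingleton.elim _ (subsingleton_lc_of_injective 𝔞 n S.X₂) _ _)
    have hs' : Function.Surjective δ' := fun x =>
      (hδ2' x).1 (@Subsingleton.elim _ (subsingleton_lc_of_injective (extIdeal 𝔞) n T.X₂) _ _)
    have hseq := mapRange_exact ((localCohomology 𝔞 n).map S.g).hom.toAddMonoidHom
      δ.hom.toAddMonoidHom hδ1
    -- By exactness, both sides are cokernels of the maps induced on `H^n` by `S.g` and `torsHom S.g`.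
    suffices h : ∃ e : (localCohomology (extIdeal 𝔞) n).obj (torsObj S.X₃) ≃+
        (ℕ →₀ (localCohomology 𝔞 n).obj S.X₃),
        ∀ x, x ∈ Set.range ((localCohomology (extIdeal 𝔞) n).map (torsHom S.g)) ↔
          e x ∈ Set.range (seqMap 𝔞 n S.g) by
      obtain ⟨e, he⟩ := h
      exact exists_equiv_of_ker e δ'.hom.toAddMonoidHom
        (Finsupp.mapRange.addMonoidHom δ.hom.toAddMonoidHom) hs'
        (Finsupp.mapRange_surjective δ (map_zero δ.hom) hs) fun x =>
          (hδ1' x).trans ((he x).trans (hseq (e x)).symm)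
    cases n with
    | zero =>
      obtain ⟨e, he⟩ := tors_zero 𝔞
      refine ⟨e S.X₃, fun x => ⟨?_, ?_⟩⟩
      · rintro ⟨y, rfl⟩
        exact ⟨e S.X₂ y, (he S.g y).symm⟩
      · rintro ⟨y, hy⟩
        obtain ⟨z, rfl⟩ := (e S.X₂).surjective y
        exact ⟨z, (e S.X₃).injective ((he S.g z).trans hy)⟩
    | succ n =>
      obtain ⟨e⟩ := ih S.X₃
      have h1 := subsingleton_lc_of_injective 𝔞 n S.X₂
      have h2 := subsingleton_lc_of_injective (extIdeal 𝔞) n T.X₂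
      refine ⟨e, fun x => ⟨?_, ?_⟩⟩
      · rintro ⟨y, rfl⟩
        rw [@Subsingleton.elim _ h2 y 0, map_zero, map_zero]
        exact ⟨0, map_zero _⟩
      · rintro ⟨y, hy⟩
        rw [Subsingleton.elim y 0, map_zero] at hy
        rw [e.map_eq_zero_iff.1 hy.symm]
        exact ⟨0, map_zero _⟩

/-- `H^{i+1}_{𝔞 A⟦X⟧ + (X)}(A⟦X⟧)` is a direct sum of countably many copies of `H^i_𝔞(A)`. The
connecting map of `0 ⟶ A⟦X⟧ ⟶ A((X)) ⟶ tors A A ⟶ 0` is bijective because `X` acts bijectively on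
Laurent series. -/
theorem lc_powerSeries [IsNoetherianRing A] (𝔞 : Ideal A) (i : ℕ) :
    Nonempty ((localCohomology (extIdeal 𝔞) (i + 1)).obj (ModuleCat.of A⟦X⟧ A⟦X⟧) ≃+
      (ℕ →₀ (localCohomology 𝔞 i).obj (ModuleCat.of A A))) := by
  let S : ShortComplex (ModuleCat.{u} A⟦X⟧) := ShortComplex.mk
    (X₁ := ModuleCat.of A⟦X⟧ A⟦X⟧) (X₂ := ModuleCat.of A⟦X⟧ A⸨X⸩) (X₃ := torsObj (ModuleCat.of A A))
    (ModuleCat.ofHom (Algebra.linearMap A⟦X⟧ A⸨X⸩)) (ModuleCat.ofHom (resMap A))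
    (ModuleCat.hom_ext (LinearMap.ext fun g => resMap_exact.apply_apply_eq_zero g))
  have hS : S.ShortExact :=
    { exact := (ShortComplex.ShortExact.moduleCat_exact_iff_function_exact _).2 resMap_exact
      mono_f := (ModuleCat.mono_iff_injective _).2 algebraMap_laurent_injective
      epi_g := (ModuleCat.epi_iff_surjective _).2 resMap_surjective }
  obtain ⟨δ, hδ1, hδ2⟩ := lc_exists_delta (extIdeal 𝔞) S hS i
  have hX : (X : A⟦X⟧) ∈ extIdeal 𝔞 :=
    (le_sup_right : Ideal.span {(X : A⟦X⟧)} ≤ extIdeal 𝔞) (Ideal.mem_span_singleton_self _)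
  have hvan : ∀ j, Subsingleton ((localCohomology (extIdeal 𝔞) j).obj S.X₂) := fun j =>
    subsingleton_lc_of_smul _ j S.X₂ X hX X_smul_bijective
  have hinj : Function.Injective δ := by
    rw [injective_iff_map_eq_zero]
    intro x hx
    obtain ⟨y, rfl⟩ := (hδ1 x).1 hx
    rw [@Subsingleton.elim _ (hvan i) y 0, map_zero]
  have hsurj : Function.Surjective δ := fun x =>
    (hδ2 x).1 (@Subsingleton.elim _ (hvan (i + 1)) _ _)
  obtain ⟨e⟩ := lc_tors 𝔞 i (ModuleCat.of A A)
  exact ⟨(AddEquiv.ofBijective δ.hom.toAddMonoidHom ⟨hinj, hsurj⟩).symm.trans e⟩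

/-- The case `A = ℤ`, `𝔞 = 0`, `i = 0`, where `H^0_0(ℤ) = ℤ`. -/
lemma lc_int : Nonempty ((localCohomology (Ideal.span {(X : ℤ⟦X⟧)}) 1).obj
    (ModuleCat.of ℤ⟦X⟧ ℤ⟦X⟧) ≃+ (ℕ →₀ ℤ)) := by
  have h : extIdeal (⊥ : Ideal ℤ) = Ideal.span {(X : ℤ⟦X⟧)} := by
    rw [extIdeal, Ideal.map_bot, bot_sup_eq]
  rw [← h]
  obtain ⟨e⟩ := lc_powerSeries (⊥ : Ideal ℤ) 0
  obtain ⟨θ, -, hinj, hrange⟩ := lc_zero_exists (⊥ : Ideal ℤ)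
  have hs : Function.Surjective (θ (ModuleCat.of ℤ ℤ)) := fun m =>
    (hrange (ModuleCat.of ℤ ℤ) m).2 ⟨1, fun r hr => by
      rw [pow_one, Ideal.mem_bot] at hr
      rw [hr, zero_smul]⟩
  exact ⟨e.trans (Finsupp.mapRange.addEquiv
    (AddEquiv.ofBijective (θ (ModuleCat.of ℤ ℤ)).toAddMonoidHom ⟨hinj _, hs⟩))⟩

end Comparison

end LocalCohomologyPowerSeries

theorem localCohomology_powerSeries_iso (A : Type u) [CommRing A] [IsNoetherianRing A]
    (𝔞 : Ideal A) (i : ℕ) :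
    Nonempty
      (((localCohomology
            (Ideal.map (algebraMap A (PowerSeries A)) 𝔞 ⊔ Ideal.span {(PowerSeries.X : PowerSeries A)})
            (i + 1)).obj (ModuleCat.of (PowerSeries A) (PowerSeries A)))
        ≃+
        TensorProduct ℤ
          ((localCohomology 𝔞 i).obj (ModuleCat.of A A))
          ((localCohomology (Ideal.span {(PowerSeries.X : PowerSeries ℤ)}) 1).obj
            (ModuleCat.of (PowerSeries ℤ) (PowerSeries ℤ)))) := by
  obtain ⟨e⟩ := LocalCohomologyPowerSeries.lc_powerSeries 𝔞 i
  obtain ⟨e'⟩ := LocalCohomologyPowerSeries.lc_int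
  let t := TensorProduct.congr (LinearEquiv.refl ℤ ((localCohomology 𝔞 i).obj (ModuleCat.of A A)))
    e'.toIntLinearEquiv
  exact ⟨e.trans (t.trans (TensorProduct.finsuppScalarRight ℤ ℤ _ ℕ)).symm.toAddEquiv⟩
end
end
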